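/- arXiv:1210.6410 — 2 statements merged into one kernel-verified Lean document; each statement's English description precedes it below -/
import Mathlib

section
/- The action of SL_2(ℂ) × SL_3(ℂ) × SL_3(ℂ) × ℂ^× on ℂ² ⊗ ℂ³ ⊗ ℂ³, where (g,h,k,t) acts by e ⊗ f ⊗ h' ↦ t·(ge) ⊗ (hf) ⊗ (kh') extended linearly, has exactly 18 orbits. -/
noncomputable section

open TensorProduct

/-- The space `ℂ² ⊗ ℂ³ ⊗ ℂ³`. -/
abbrev Tensor233 : Type :=
  TensorProduct ℂ (Fin 2 → ℂ) (TensorProduct ℂ (Fin 3 → ℂ) (Fin 3 → ℂ))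

/-- Two tensors are related if one is obtained from the other by the action of an
element `(g, h, k, t)` of `SL₂(ℂ) × SL₃(ℂ) × SL₃(ℂ) × ℂ^×` acting componentwise on
the tensor factors and by scaling. -/
def relT10 (v w : Tensor233) : Prop :=
  ∃ (g : Matrix.SpecialLinearGroup (Fin 2) ℂ) (h : Matrix.SpecialLinearGroup (Fin 3) ℂ)
    (k : Matrix.SpecialLinearGroup (Fin 3) ℂ) (t : ℂˣ),
    w = (t : ℂ) •
      (TensorProduct.map ((g : Matrix (Fin 2) (Fin 2) ℂ)).mulVecLin
        (TensorProduct.map ((h : Matrix (Fin 3) (Fin 3) ℂ)).mulVecLin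
          ((k : Matrix (Fin 3) (Fin 3) ℂ)).mulVecLin)) v

abbrev Mat3 : Type := Matrix (Fin 3) (Fin 3) ℂ

/-- Equivalence of the pencils spanned by two pairs of matrices. -/
def PencilEquiv (A B A' B' : Mat3) : Prop :=
  ∃ (P Q : Mat3) (a b c d : ℂ), P.det ≠ 0 ∧ Q.det ≠ 0 ∧ a * d - b * c ≠ 0 ∧
    A' = P * (a • A + b • B) * Q ∧ B' = P * (c • A + d • B) * Q

namespace PencilEquiv

variable {A B A' B' A'' B'' : Mat3}

theorem trans (h : PencilEquiv A B A' B') (h' : PencilEquiv A' B' A'' B'') :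
    PencilEquiv A B A'' B'' := by
  obtain ⟨P, Q, a, b, c, d, hP, hQ, hd, rfl, rfl⟩ := h
  obtain ⟨P', Q', a', b', c', d', hP', hQ', hd', rfl, rfl⟩ := h'
  refine ⟨P' * P, Q * Q', a' * a + b' * c, a' * b + b' * d, c' * a + d' * c, c' * b + d' * d,
    ?_, ?_, ?_, ?_, ?_⟩
  · rw [Matrix.det_mul]; exact mul_ne_zero hP' hP
  · rw [Matrix.det_mul]; exact mul_ne_zero hQ hQ'
  · convert mul_ne_zero hd hd' using 1; ring
  all_goals
    simp only [Matrix.mul_add, Matrix.add_mul, Matrix.mul_smul, Matrix.smul_mul, smul_add,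
      smul_smul, add_smul, Matrix.mul_assoc]
    abel

theorem mul_mul {P Q : Mat3} (hP : P.det ≠ 0) (hQ : Q.det ≠ 0) (A B : Mat3) :
    PencilEquiv A B (P * A * Q) (P * B * Q) :=
  ⟨P, Q, 1, 0, 0, 1, hP, hQ, by simp, by simp, by simp⟩

theorem mix {a b c d : ℂ} (h : a * d - b * c ≠ 0) (A B : Mat3) :
    PencilEquiv A B (a • A + b • B) (c • A + d • B) :=
  ⟨1, 1, a, b, c, d, by simp, by simp, h, by simp, by simp⟩

theorem swap (A B : Mat3) : PencilEquiv A B B A := by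
  simpa using mix (a := 0) (b := 1) (c := 1) (d := 0) (by simp) A B

theorem symm (h : PencilEquiv A B A' B') : PencilEquiv A' B' A B := by
  obtain ⟨P, Q, a, b, c, d, hP, hQ, hd, rfl, rfl⟩ := h
  have hcancel (x y : ℂ) (X Y : Mat3) :
      ((a * d - b * c)⁻¹ • P⁻¹) * (x • (P * X * Q) + y • (P * Y * Q)) * Q⁻¹ =
        (a * d - b * c)⁻¹ • (x • X + y • Y) := by
    have h (X : Mat3) : P⁻¹ * (P * X * Q) * Q⁻¹ = X := by
      rw [Matrix.mul_assoc P X Q, Matrix.nonsing_inv_mul_cancel_left _ _ hP.isUnit,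
        Matrix.mul_nonsing_inv_cancel_right _ _ hQ.isUnit]
    rw [Matrix.smul_mul, Matrix.smul_mul, Matrix.mul_add, Matrix.add_mul, Matrix.mul_smul,
      Matrix.mul_smul, Matrix.smul_mul, Matrix.smul_mul, h, h]
  refine ⟨(a * d - b * c)⁻¹ • P⁻¹, Q⁻¹, d, -b, -c, a, ?_, ?_, ?_, ?_, ?_⟩
  · rw [Matrix.det_smul]
    exact mul_ne_zero (pow_ne_zero _ (inv_ne_zero hd))
      (Matrix.isUnit_nonsing_inv_det _ hP.isUnit).ne_zero
  · exact (Matrix.isUnit_nonsing_inv_det _ hQ.isUnit).ne_zero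
  · convert hd using 1; ring
  all_goals
    rw [hcancel, eq_inv_smul_iff₀ hd]
    module

end PencilEquiv

/-- The standard basis of `ℂ² ⊗ ℂ³ ⊗ ℂ³`. -/
def stdBasis233 : Module.Basis (Fin 2 × Fin 3 × Fin 3) ℂ Tensor233 :=
  (Pi.basisFun ℂ (Fin 2)).tensorProduct ((Pi.basisFun ℂ (Fin 3)).tensorProduct
    (Pi.basisFun ℂ (Fin 3)))

/-- The `i`-th slice of a tensor, as a `3 × 3` matrix. -/
def slice (v : Tensor233) (i : Fin 2) : Mat3 :=
  Matrix.of fun j k => stdBasis233.repr v (i, j, k)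

theorem slice_tmul (x : Fin 2 → ℂ) (y z : Fin 3 → ℂ) (i : Fin 2) :
    slice (x ⊗ₜ (y ⊗ₜ z)) i = x i • Matrix.vecMulVec y z := by
  ext j k
  simp only [slice, stdBasis233, Matrix.vecMulVec_apply, Matrix.of_apply,
    Module.Basis.tensorProduct_repr_tmul_apply, Pi.basisFun_repr, Matrix.smul_apply, smul_eq_mul]
  ring

theorem slice_add (v w : Tensor233) (i : Fin 2) : slice (v + w) i = slice v i + slice w i := by
  ext j k
  simp [slice]

theorem slice_smul (t : ℂ) (v : Tensor233) (i : Fin 2) : slice (t • v) i = t • slice v i := by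
  ext j k
  simp [slice]

theorem slice_zero (i : Fin 2) : slice 0 i = 0 := by
  ext j k
  simp [slice]

theorem slice_injective {v w : Tensor233} (h0 : slice v 0 = slice w 0)
    (h1 : slice v 1 = slice w 1) : v = w := by
  apply stdBasis233.repr.injective
  ext ⟨i, j, k⟩
  fin_cases i
  · exact congr_fun (congr_fun h0 j) k
  · exact congr_fun (congr_fun h1 j) k

theorem exists_slice_eq (A B : Mat3) : ∃ v : Tensor233, slice v 0 = A ∧ slice v 1 = B := by
  refine ⟨stdBasis233.equivFun.symm fun p => ![A, B] p.1 p.2.1 p.2.2, ?_, ?_⟩ <;>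
  · ext j k
    rw [slice, Matrix.of_apply, ← Module.Basis.equivFun_apply, LinearEquiv.apply_symm_apply]
    rfl

theorem slice_map (g : Matrix (Fin 2) (Fin 2) ℂ) (h k : Mat3) (v : Tensor233) (i : Fin 2) :
    slice (TensorProduct.map g.mulVecLin (TensorProduct.map h.mulVecLin k.mulVecLin) v) i =
      h * (g i 0 • slice v 0 + g i 1 • slice v 1) * k.transpose := by
  induction v using TensorProduct.induction_on with
  | zero => simp [slice_zero]
  | add v w hv hw =>
    rw [map_add, slice_add, hv, hw, slice_add, slice_add]
    simp only [Matrix.mul_add, Matrix.add_mul, smul_add]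
    abel
  | tmul x m =>
    induction m using TensorProduct.induction_on with
    | zero => simp [slice_zero]
    | add v w hv hw =>
      rw [tmul_add, map_add, slice_add, hv, hw, slice_add, slice_add]
      simp only [Matrix.mul_add, Matrix.add_mul, smul_add]
      abel
    | tmul y z =>
      rw [TensorProduct.map_tmul, TensorProduct.map_tmul, slice_tmul, slice_tmul, slice_tmul,
        smul_smul, smul_smul, ← add_smul, Matrix.mul_smul, Matrix.smul_mul,
        Matrix.mul_vecMulVec, Matrix.vecMulVec_mul, Matrix.vecMul_transpose]
      simp [Matrix.mulVec, dotProduct, Fin.sum_univ_two]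

theorem exists_smul_det_eq_one {n : ℕ} (hn : n ≠ 0) {M : Matrix (Fin n) (Fin n) ℂ}
    (hM : M.det ≠ 0) : ∃ s : ℂ, s ≠ 0 ∧ (s • M).det = 1 := by
  obtain ⟨s, hs⟩ := IsAlgClosed.exists_pow_nat_eq (M.det)⁻¹ (Nat.pos_of_ne_zero hn)
  refine ⟨s, ?_, ?_⟩
  · rintro rfl
    rw [zero_pow hn] at hs
    exact inv_ne_zero hM hs.symm
  · rw [Matrix.det_smul, Fintype.card_fin, hs, inv_mul_cancel₀ hM]

theorem relT10_iff (v w : Tensor233) :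
    relT10 v w ↔ PencilEquiv (slice v 0) (slice v 1) (slice w 0) (slice w 1) := by
  constructor
  · rintro ⟨g, h, k, t, rfl⟩
    refine ⟨(t : ℂ) • (h : Mat3), (k : Mat3).transpose, (g : Matrix (Fin 2) (Fin 2) ℂ) 0 0,
      (g : Matrix (Fin 2) (Fin 2) ℂ) 0 1, (g : Matrix (Fin 2) (Fin 2) ℂ) 1 0,
      (g : Matrix (Fin 2) (Fin 2) ℂ) 1 1, ?_, ?_, ?_, ?_, ?_⟩
    · simp
    · simp
    · rw [← Matrix.det_fin_two, g.det_coe]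
      exact one_ne_zero
    all_goals rw [slice_smul, slice_map, Matrix.smul_mul, Matrix.smul_mul]
  · rintro ⟨P, Q, a, b, c, d, hP, hQ, hd, h0, h1⟩
    obtain ⟨p, hp, hP'⟩ := exists_smul_det_eq_one three_ne_zero hP
    obtain ⟨q, hq, hQ'⟩ := exists_smul_det_eq_one three_ne_zero
      (M := Q.transpose) (by rwa [Matrix.det_transpose])
    obtain ⟨r, hr, hg'⟩ := exists_smul_det_eq_one two_ne_zero
      (M := !![a, b; c, d]) (by rwa [Matrix.det_fin_two_of])
    refine ⟨⟨_, hg'⟩, ⟨_, hP'⟩, ⟨_, hQ'⟩, Units.mk0 (p * q * r)⁻¹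
      (inv_ne_zero (mul_ne_zero (mul_ne_zero hp hq) hr)), slice_injective ?_ ?_⟩
    all_goals
      rw [slice_smul, slice_map]
      simp only [h0, h1, Matrix.transpose_smul, Matrix.transpose_transpose, Matrix.smul_apply,
        Matrix.smul_mul, Matrix.mul_smul, smul_smul, Units.val_mk0, Matrix.mul_add,
        Matrix.add_mul, smul_add, Matrix.of_apply, Matrix.cons_val_zero, Matrix.cons_val_one,
        smul_eq_mul, Matrix.cons_val', Matrix.cons_val_fin_one]
      congr 2 <;> field_simp

/-- Representatives of the equivalence classes of pencils of `3 × 3` matrices. -/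
def normalForm : Fin 18 → Mat3 × Mat3 :=
  ![(0, 0),
    (0, !![1, 0, 0; 0, 0, 0; 0, 0, 0]),
    (!![0, 1, 0; 0, 0, 0; 0, 0, 0], !![1, 0, 0; 0, 0, 0; 0, 0, 0]),
    (!![0, 0, 0; 1, 0, 0; 0, 0, 0], !![1, 0, 0; 0, 0, 0; 0, 0, 0]),
    (!![0, 1, 0; 1, 0, 0; 0, 0, 0], !![1, 0, 0; 0, 0, 0; 0, 0, 0]),
    (!![0, 0, 0; 0, 0, 0; 0, 0, 1], !![1, 0, 0; 0, 0, 0; 0, 0, 0]),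
    (!![0, 1, 0; 0, 0, 0; 0, 0, 1], !![1, 0, 0; 0, 0, 0; 0, 0, 0]),
    (!![0, 0, 0; 1, 0, 0; 0, 0, 1], !![1, 0, 0; 0, 0, 0; 0, 0, 0]),
    (!![0, 1, 0; 1, 0, 0; 0, 0, 1], !![1, 0, 0; 0, 0, 0; 0, 0, 0]),
    (!![0, 0, 0; 0, 1, 0; 0, 0, 1], !![1, 0, 0; 0, 0, 0; 0, 0, 0]),
    (0, !![1, 0, 0; 0, 1, 0; 0, 0, 0]),
    (0, !![1, 0, 0; 0, 1, 0; 0, 0, 1]),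
    (!![0, 0, 1; 1, 0, 0; 0, 0, 0], !![1, 0, 0; 0, 1, 0; 0, 0, 0]),
    (!![0, 1, 0; 0, 0, 0; 1, 0, 0], !![1, 0, 0; 0, 1, 0; 0, 0, 0]),
    (!![0, 0, 1; 0, 0, 0; 0, 1, 0], !![1, 0, 0; 0, 1, 0; 0, 0, 0]),
    (!![0, 0, 1; 1, 0, 0; 0, 1, 0], !![1, 0, 0; 0, 1, 0; 0, 0, 0]),
    (!![0, 1, 0; 0, 0, 0; 0, 0, 1], !![1, 0, 0; 0, 1, 0; 0, 0, 0]),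
    (!![0, 0, 0; 0, 1, 0; 0, 0, 1], !![1, 0, 0; 0, 1, 0; 0, 0, 0])]

/-- The pencil spanned by `A` and `B` is equivalent to one of the normal forms. -/
def HasNormalForm (A B : Mat3) : Prop :=
  ∃ i, PencilEquiv A B (normalForm i).1 (normalForm i).2

theorem PencilEquiv.refl (A B : Mat3) : PencilEquiv A B A B := by
  simpa using PencilEquiv.mul_mul (P := 1) (Q := 1) (by simp) (by simp) A B

namespace HasNormalForm

variable {A B A' B' : Mat3}

theorem of_equiv (h : PencilEquiv A B A' B') (h' : HasNormalForm A' B') : HasNormalForm A B :=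
  h'.imp fun _ hi => h.trans hi

theorem of_swap (h : HasNormalForm B A) : HasNormalForm A B :=
  h.of_equiv (PencilEquiv.swap A B)

theorem of_mul_mul {P Q : Mat3} (h : HasNormalForm A' B') (hP : P.det ≠ 0) (hQ : Q.det ≠ 0)
    (hA : P * A * Q = A') (hB : P * B * Q = B') : HasNormalForm A B := by
  subst hA hB
  exact h.of_equiv (PencilEquiv.mul_mul hP hQ A B)

theorem of_add_smul (s : ℂ) (h : HasNormalForm (A + s • B) B) : HasNormalForm A B := by
  refine h.of_equiv ?_
  simpa using PencilEquiv.mix (a := 1) (b := s) (c := 0) (d := 1) (by simp) A B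

theorem of_normalForm (i : Fin 18) : HasNormalForm (normalForm i).1 (normalForm i).2 :=
  ⟨i, PencilEquiv.refl _ _⟩

end HasNormalForm

open HasNormalForm

theorem exists_mul_mul_eq_diagonal {n : ℕ} (M : Matrix (Fin n) (Fin n) ℂ) :
    ∃ (P Q : Matrix (Fin n) (Fin n) ℂ) (D : Fin n → ℂ), P.det ≠ 0 ∧ Q.det ≠ 0 ∧
      (∀ i, D i = 0 ∨ D i = 1) ∧ P * M * Q = Matrix.diagonal D := by
  obtain ⟨L, L', D, h⟩ := Matrix.Pivot.exists_list_transvec_mul_mul_list_transvec_eq_diagonal M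
  refine ⟨Matrix.diagonal (fun i => if D i = 0 then 1 else (D i)⁻¹) *
    (L.map Matrix.TransvectionStruct.toMatrix).prod,
    (L'.map Matrix.TransvectionStruct.toMatrix).prod, fun i => if D i = 0 then 0 else 1,
    ?_, ?_, ?_, ?_⟩
  · rw [Matrix.det_mul, Matrix.TransvectionStruct.det_toMatrix_prod, mul_one,
      Matrix.det_diagonal]
    refine Finset.prod_ne_zero_iff.2 fun i _ => ?_
    split_ifs with hi
    · exact one_ne_zero
    · exact inv_ne_zero hi
  · rw [Matrix.TransvectionStruct.det_toMatrix_prod]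
    exact one_ne_zero
  · intro i
    dsimp only
    split_ifs <;> simp
  · rw [Matrix.mul_assoc, Matrix.mul_assoc, ← Matrix.mul_assoc (List.prod _), h,
      Matrix.diagonal_mul_diagonal]
    congr 1
    ext i
    split_ifs with hi <;> simp [hi]

theorem exists_mul_mul_fin_two (a b c d : ℂ) :
    ∃ (P Q : Matrix (Fin 2) (Fin 2) ℂ), P.det ≠ 0 ∧ Q.det ≠ 0 ∧
      (P * !![a, b; c, d] * Q = !![0, 0; 0, 0] ∨ P * !![a, b; c, d] * Q = !![0, 0; 0, 1] ∨
        P * !![a, b; c, d] * Q = !![1, 0; 0, 1]) := by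
  obtain ⟨P, Q, D, hP, hQ, hD, h⟩ := exists_mul_mul_eq_diagonal !![a, b; c, d]
  have key : P * !![a, b; c, d] * Q = !![D 0, 0; 0, D 1] := by
    rw [h]
    ext i j
    fin_cases i <;> fin_cases j <;> simp
  rcases hD 0 with h0 | h0 <;> rcases hD 1 with h1 | h1 <;> rw [h0, h1] at key
  · exact ⟨P, Q, hP, hQ, Or.inl key⟩
  · exact ⟨P, Q, hP, hQ, Or.inr (Or.inl key)⟩
  · refine ⟨!![0, 1; 1, 0] * P, Q * !![0, 1; 1, 0], ?_, ?_, Or.inr (Or.inl ?_)⟩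
    · rw [Matrix.det_mul]
      simpa using hP
    · rw [Matrix.det_mul]
      simpa using hQ
    · rw [← Matrix.mul_assoc, Matrix.mul_assoc !![0, 1; 1, 0], Matrix.mul_assoc !![0, 1; 1, 0],
        key]
      ext i j
      fin_cases i <;> fin_cases j <;> simp
  · exact ⟨P, Q, hP, hQ, Or.inr (Or.inr key)⟩

theorem exists_dotProduct_eq (r s : ℂ) :
    ∃ a b c d : ℂ, a * d - b * c ≠ 0 ∧ r * b + s * d = 0 ∧
      (r * a + s * c = 0 ∨ r * a + s * c = 1) := by
  by_cases hr : r = 0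
  · by_cases hs : s = 0
    · exact ⟨1, 0, 0, 1, by simp, by simp [hs], by simp [hr]⟩
    · exact ⟨0, 1, s⁻¹, 0, by simp [hs], by simp [hr], by simp [hs]⟩
  · exact ⟨r⁻¹, -s, 0, r, by simp [hr], by ring, by simp [hr]⟩

theorem fin_three_zero : (!![0, 0, 0; 0, 0, 0; 0, 0, 0] : Mat3) = 0 := by
  ext i j
  fin_cases i <;> fin_cases j <;> rfl

theorem hasNormalForm_of_cross (a r s u v : ℂ) :
    HasNormalForm !![a, r, s; u, 0, 0; v, 0, 0] !![1, 0, 0; 0, 0, 0; 0, 0, 0] := by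
  obtain ⟨q₁, q₂, q₃, q₄, hq, h₀, h₁⟩ := exists_dotProduct_eq r s
  obtain ⟨p₁, p₂, p₃, p₄, hp, k₀, k₁⟩ := exists_dotProduct_eq u v
  refine of_add_smul (-a) (of_mul_mul (P := !![1, 0, 0; 0, p₁, p₃; 0, p₂, p₄])
    (Q := !![1, 0, 0; 0, q₁, q₂; 0, q₃, q₄])
    (A' := !![0, r * q₁ + s * q₃, 0; u * p₁ + v * p₃, 0, 0; 0, 0, 0])
    (B' := !![1, 0, 0; 0, 0, 0; 0, 0, 0]) ?_ ?_ ?_ ?_ ?_)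
  · rcases h₁ with h₁ | h₁ <;> rcases k₁ with k₁ | k₁ <;> rw [h₁, k₁]
    · rw [fin_three_zero]
      exact of_normalForm 1
    · exact of_normalForm 3
    · exact of_normalForm 2
    · exact of_normalForm 4
  · rw [Matrix.det_fin_three]
    simp
    grind
  · rw [Matrix.det_fin_three]
    simp
    grind
  all_goals
    ext i j
    fin_cases i <;> fin_cases j <;> simp [Matrix.mul_apply, Fin.sum_univ_three] <;> grind

theorem hasNormalForm_of_hook (a r s u v : ℂ) :
    HasNormalForm !![a, r, s; u, 0, 0; v, 0, 1] !![1, 0, 0; 0, 0, 0; 0, 0, 0] := by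
  have key (r u : ℂ) : HasNormalForm !![0, r, 0; u, 0, 0; 0, 0, 1]
      !![1, 0, 0; 0, 0, 0; 0, 0, 0] := by
    by_cases hr : r = 0 <;> by_cases hu : u = 0
    · subst hr hu
      exact of_normalForm 5
    · subst hr
      refine of_mul_mul (P := !![1, 0, 0; 0, u⁻¹, 0; 0, 0, 1]) (Q := 1)
        (of_normalForm 7) ?_ ?_ ?_ ?_
      · simp [Matrix.det_fin_three] <;> grind
      · simp
      · ext i j
        fin_cases i <;> fin_cases j <;>
          simp [Matrix.mul_apply, Fin.sum_univ_three, normalForm] <;> grind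
      · ext i j
        fin_cases i <;> fin_cases j <;>
          simp [Matrix.mul_apply, Fin.sum_univ_three, normalForm]
    · subst hu
      refine of_mul_mul (P := 1) (Q := !![1, 0, 0; 0, r⁻¹, 0; 0, 0, 1])
        (of_normalForm 6) ?_ ?_ ?_ ?_
      · simp
      · simp [Matrix.det_fin_three] <;> grind
      · ext i j
        fin_cases i <;> fin_cases j <;>
          simp [Matrix.mul_apply, Fin.sum_univ_three, normalForm] <;> grind
      · ext i j
        fin_cases i <;> fin_cases j <;>
          simp [Matrix.mul_apply, Fin.sum_univ_three, normalForm]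
    · refine of_mul_mul (P := !![1, 0, 0; 0, u⁻¹, 0; 0, 0, 1])
        (Q := !![1, 0, 0; 0, r⁻¹, 0; 0, 0, 1])
        (of_normalForm 8) ?_ ?_ ?_ ?_
      · simp [Matrix.det_fin_three] <;> grind
      · simp [Matrix.det_fin_three] <;> grind
      · ext i j
        fin_cases i <;> fin_cases j <;>
          simp [Matrix.mul_apply, Fin.sum_univ_three, normalForm] <;> grind
      · ext i j
        fin_cases i <;> fin_cases j <;>
          simp [Matrix.mul_apply, Fin.sum_univ_three, normalForm]
  refine of_add_smul (s * v - a) (of_mul_mul (P := !![1, 0, -s; 0, 1, 0; 0, 0, 1])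
    (Q := !![1, 0, 0; 0, 1, 0; -v, 0, 1]) (key r u) ?_ ?_ ?_ ?_)
  · simp [Matrix.det_fin_three]
  · simp [Matrix.det_fin_three]
  · ext i j
    fin_cases i <;> fin_cases j <;>
      simp [Matrix.mul_apply, Fin.sum_univ_three]
  · ext i j
    fin_cases i <;> fin_cases j <;>
      simp [Matrix.mul_apply, Fin.sum_univ_three]

/-- Pencils containing the rank-one matrix `E₁₁`. -/
theorem hasNormalForm_rank_one (A : Mat3) :
    HasNormalForm A !![1, 0, 0; 0, 0, 0; 0, 0, 0] := by
  obtain ⟨P, Q, hP, hQ, h⟩ := exists_mul_mul_fin_two (A 1 1) (A 1 2) (A 2 1) (A 2 2)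
  refine of_mul_mul (P := !![1, 0, 0; 0, P 0 0, P 0 1; 0, P 1 0, P 1 1])
    (Q := !![1, 0, 0; 0, Q 0 0, Q 0 1; 0, Q 1 0, Q 1 1])
    (A' := !![A 0 0, A 0 1 * Q 0 0 + A 0 2 * Q 1 0, A 0 1 * Q 0 1 + A 0 2 * Q 1 1;
      P 0 0 * A 1 0 + P 0 1 * A 2 0, (P * !![A 1 1, A 1 2; A 2 1, A 2 2] * Q) 0 0,
        (P * !![A 1 1, A 1 2; A 2 1, A 2 2] * Q) 0 1;
      P 1 0 * A 1 0 + P 1 1 * A 2 0, (P * !![A 1 1, A 1 2; A 2 1, A 2 2] * Q) 1 0,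
        (P * !![A 1 1, A 1 2; A 2 1, A 2 2] * Q) 1 1])
    (B' := !![1, 0, 0; 0, 0, 0; 0, 0, 0]) ?_ ?_ ?_ ?_ ?_
  · rcases h with h | h | h <;> rw [h]
    · exact hasNormalForm_of_cross _ _ _ _ _
    · exact hasNormalForm_of_hook _ _ _ _ _
    · generalize A 0 0 = a
      generalize A 0 1 * Q 0 0 + A 0 2 * Q 1 0 = r
      generalize A 0 1 * Q 0 1 + A 0 2 * Q 1 1 = s
      generalize P 0 0 * A 1 0 + P 0 1 * A 2 0 = u
      generalize P 1 0 * A 1 0 + P 1 1 * A 2 0 = v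
      refine of_add_smul (r * u + s * v - a) (of_mul_mul (P := !![1, -r, -s; 0, 1, 0; 0, 0, 1])
        (Q := !![1, 0, 0; -u, 1, 0; -v, 0, 1]) (of_normalForm 9) ?_ ?_ ?_ ?_)
      · simp [Matrix.det_fin_three]
      · simp [Matrix.det_fin_three]
      · ext i j
        fin_cases i <;> fin_cases j <;>
          simp [Matrix.mul_apply, Fin.sum_univ_three, normalForm] <;> grind
      · ext i j
        fin_cases i <;> fin_cases j <;>
          simp [Matrix.mul_apply, Fin.sum_univ_three, normalForm]
  · rw [Matrix.det_fin_two] at hP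
    simpa [Matrix.det_fin_three] using hP
  · rw [Matrix.det_fin_two] at hQ
    simpa [Matrix.det_fin_three] using hQ
  · conv_lhs => rw [Matrix.eta_fin_three A]
    ext i j
    fin_cases i <;> fin_cases j <;>
      simp [Matrix.mul_apply, Fin.sum_univ_three, Fin.sum_univ_two]
  · ext i j
    fin_cases i <;> fin_cases j <;> simp [Matrix.mul_apply, Fin.sum_univ_three]

theorem hasNormalForm_of_diagonal {A B : Mat3} {P Q : Mat3} {D : Fin 3 → ℂ} (hP : P.det ≠ 0)
    (hQ : Q.det ≠ 0) (h : P * B * Q = !![D 0, 0, 0; 0, D 1, 0; 0, 0, D 2])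
    (hD : D 0 ≠ 0 ∧ D 1 = 0 ∧ D 2 = 0 ∨ D 0 = 0 ∧ D 1 ≠ 0 ∧ D 2 = 0 ∨
      D 0 = 0 ∧ D 1 = 0 ∧ D 2 ≠ 0) : HasNormalForm A B := by
  refine of_mul_mul (A' := P * A * Q) ?_ hP hQ rfl h
  rcases hD with ⟨h0, h1, h2⟩ | ⟨h0, h1, h2⟩ | ⟨h0, h1, h2⟩
  · refine of_mul_mul (P := !![(D 0)⁻¹, 0, 0; 0, 1, 0; 0, 0, 1]) (Q := 1)
      (hasNormalForm_rank_one _) ?_ ?_ rfl ?_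
    · simp [Matrix.det_fin_three] <;> grind
    · simp
    · ext i j
      fin_cases i <;> fin_cases j <;>
        simp [Matrix.mul_apply, Fin.sum_univ_three] <;> grind
  · refine of_mul_mul (P := !![0, (D 1)⁻¹, 0; 1, 0, 0; 0, 0, 1])
      (Q := !![0, 1, 0; 1, 0, 0; 0, 0, 1]) (hasNormalForm_rank_one _) ?_ ?_ rfl ?_
    · simp [Matrix.det_fin_three] <;> grind
    · simp [Matrix.det_fin_three]
    · ext i j
      fin_cases i <;> fin_cases j <;>
        simp [Matrix.mul_apply, Fin.sum_univ_three] <;> grind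
  · refine of_mul_mul (P := !![0, 0, (D 2)⁻¹; 0, 1, 0; 1, 0, 0])
      (Q := !![0, 0, 1; 0, 1, 0; 1, 0, 0]) (hasNormalForm_rank_one _) ?_ ?_ rfl ?_
    · simp [Matrix.det_fin_three] <;> grind
    · simp [Matrix.det_fin_three]
    · ext i j
      fin_cases i <;> fin_cases j <;>
        simp [Matrix.mul_apply, Fin.sum_univ_three] <;> grind

theorem hasNormalForm_jordan (e : ℂ) :
    HasNormalForm !![0, 1, 0; 0, 0, 0; 0, 0, e] !![1, 0, 0; 0, 1, 0; 0, 0, 0] := by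
  by_cases he : e = 0
  · subst he
    refine of_swap (hasNormalForm_of_diagonal (P := 1) (Q := !![0, 1, 0; 1, 0, 0; 0, 0, 1])
      (D := ![1, 0, 0]) ?_ ?_ ?_ (by simp))
    · simp
    · simp [Matrix.det_fin_three]
    · ext i j
      fin_cases i <;> fin_cases j <;>
        simp [Matrix.mul_apply, Fin.sum_univ_three]
  · refine of_mul_mul (P := !![1, 0, 0; 0, 1, 0; 0, 0, e⁻¹]) (Q := 1) (of_normalForm 16) ?_ ?_ ?_ ?_
    · simp [Matrix.det_fin_three] <;> grind
    · simp
    · ext i j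
      fin_cases i <;> fin_cases j <;>
        simp [Matrix.mul_apply, Fin.sum_univ_three, normalForm] <;> grind
    · ext i j
      fin_cases i <;> fin_cases j <;>
        simp [Matrix.mul_apply, Fin.sum_univ_three, normalForm]

theorem hasNormalForm_split (s e : ℂ) :
    HasNormalForm !![s, 0, 0; 0, 0, 0; 0, 0, e] !![1, 0, 0; 0, 1, 0; 0, 0, 0] := by
  by_cases hs : s = 0 <;> by_cases he : e = 0
  · subst hs he
    rw [fin_three_zero]
    exact of_normalForm 10
  · refine of_swap (hasNormalForm_of_diagonal (P := 1) (Q := 1) (D := ![s, 0, e]) ?_ ?_ ?_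
      (by simp [hs, he]))
    · simp
    · simp
    · ext i j
      fin_cases i <;> fin_cases j <;>
        simp [Matrix.mul_apply, Fin.sum_univ_three]
  · refine of_swap (hasNormalForm_of_diagonal (P := 1) (Q := 1) (D := ![s, 0, e]) ?_ ?_ ?_
      (by simp [hs, he]))
    · simp
    · simp
    · ext i j
      fin_cases i <;> fin_cases j <;>
        simp [Matrix.mul_apply, Fin.sum_univ_three]
  · refine of_equiv (PencilEquiv.mix (a := s⁻¹) (b := 0) (c := 0) (d := 1) (by simpa using hs) _ _)
      (of_mul_mul (P := !![0, 1, 0; 1, 0, 0; 0, 0, s / e]) (Q := !![0, 1, 0; 1, 0, 0; 0, 0, 1])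
        (of_normalForm 17) ?_ ?_ ?_ ?_)
    · simp [Matrix.det_fin_three] <;> grind
    · simp [Matrix.det_fin_three]
    · ext i j
      fin_cases i <;> fin_cases j <;>
        simp [Matrix.mul_apply, Fin.sum_univ_three, normalForm] <;> grind
    · ext i j
      fin_cases i <;> fin_cases j <;>
        simp [Matrix.mul_apply, Fin.sum_univ_three, normalForm]

theorem exists_det_eq_one_fin_two {u v : ℂ} (h : ¬(u = 0 ∧ v = 0)) :
    ∃ w z : ℂ, u * z - v * w = 1 := by
  by_cases hu : u = 0
  · have hv : v ≠ 0 := fun hv => h ⟨hu, hv⟩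
    exact ⟨-v⁻¹, 0, by simp [hv]⟩
  · exact ⟨0, u⁻¹, by simp [hu]⟩

theorem eq_mul_of_dot_eq_zero {u₁ u₂ v₁ v₂ : ℂ} (hu : ¬(u₁ = 0 ∧ u₂ = 0))
    (h : v₁ * u₁ + v₂ * u₂ = 0) : ∃ t, v₁ = t * -u₂ ∧ v₂ = t * u₁ := by
  by_cases h₁ : u₁ = 0
  · have h₂ : u₂ ≠ 0 := fun h₂ => hu ⟨h₁, h₂⟩
    exact ⟨-(v₁ / u₂), by field_simp, by grind⟩
  · exact ⟨v₂ / u₁, by grind, by field_simp⟩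

/-- Similarity preserves pencils containing `E₁₁ + E₂₂`. -/
theorem hasNormalForm_of_conj {p q r s : ℂ} (h : p * s - q * r ≠ 0) {c : ℂ} (hc : c ≠ 0)
    {A A' : Mat3} (hA : !![s, -q, 0; -r, p, 0; 0, 0, c] * A * !![p, q, 0; r, s, 0; 0, 0, 1] =
      (p * s - q * r) • A')
    (hA' : HasNormalForm A' !![1, 0, 0; 0, 1, 0; 0, 0, 0]) :
    HasNormalForm A !![1, 0, 0; 0, 1, 0; 0, 0, 0] := by
  refine of_mul_mul (P := (p * s - q * r)⁻¹ • !![s, -q, 0; -r, p, 0; 0, 0, c])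
    (Q := !![p, q, 0; r, s, 0; 0, 0, 1]) hA' ?_ ?_ ?_ ?_
  · rw [Matrix.det_smul]
    simp [Matrix.det_fin_three]
    grind
  · simp [Matrix.det_fin_three]
    grind
  · rw [Matrix.smul_mul, Matrix.smul_mul, hA, smul_smul, inv_mul_cancel₀ h, one_smul]
  · ext i j
    fin_cases i <;> fin_cases j <;>
      simp [Matrix.mul_apply, Fin.sum_univ_three] <;> grind

theorem exists_shift_rank_one (a b c d : ℂ) : ∃ t u₁ u₂ v₁ v₂ : ℂ,
    a + t = u₁ * v₁ ∧ b = u₁ * v₂ ∧ c = u₂ * v₁ ∧ d + t = u₂ * v₂ := by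
  obtain ⟨s, hs⟩ := IsAlgClosed.exists_pow_nat_eq ((a - d) ^ 2 + 4 * (b * c)) two_pos
  have h : (a - (a + d + s) / 2) * (d - (a + d + s) / 2) = b * c := by grind
  refine ⟨-((a + d + s) / 2), ?_⟩
  generalize (a + d + s) / 2 = t at h
  by_cases hb : b = 0
  · subst hb
    by_cases ha : a - t = 0
    · exact ⟨0, 1, c, d - t, by grind, by simp, by simp, by ring⟩
    · exact ⟨a - t, c, 1, 0, by ring, by simp, by simp, by grind⟩
  · exact ⟨1, (d - t) / b, a - t, b, by ring, by ring, by grind, by grind⟩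

theorem hasNormalForm_of_block (a b c d e : ℂ) :
    HasNormalForm !![a, b, 0; c, d, 0; 0, 0, e] !![1, 0, 0; 0, 1, 0; 0, 0, 0] := by
  obtain ⟨t, u₁, u₂, v₁, v₂, h₁, rfl, rfl, h₂⟩ := exists_shift_rank_one a b c d
  refine of_add_smul t ?_
  have hA : !![a, u₁ * v₂, 0; u₂ * v₁, d, 0; 0, 0, e] +
      t • !![1, 0, 0; 0, 1, 0; 0, 0, 0] =
      !![u₁ * v₁, u₁ * v₂, 0; u₂ * v₁, u₂ * v₂, 0; 0, 0, e] := by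
    ext i j
    fin_cases i <;> fin_cases j <;> simp [h₁, h₂]
  rw [hA]
  by_cases hs : v₁ * u₁ + v₂ * u₂ = 0
  · by_cases hu : u₁ = 0 ∧ u₂ = 0
    · obtain ⟨rfl, rfl⟩ := hu
      simpa using hasNormalForm_split 0 e
    · obtain ⟨t, rfl, rfl⟩ := eq_mul_of_dot_eq_zero hu hs
      obtain ⟨w, z, hwz⟩ := exists_det_eq_one_fin_two hu
      by_cases ht : t = 0
      · subst ht
        simpa using hasNormalForm_split 0 e
      · refine hasNormalForm_of_conj (p := t * u₁) (q := w) (r := t * u₂) (s := z) (c := 1)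
          ?_ one_ne_zero ?_ (hasNormalForm_jordan (e / t))
        · grind
        · ext i j
          fin_cases i <;> fin_cases j <;>
            simp [Matrix.mul_apply, Fin.sum_univ_three] <;> grind
  · refine hasNormalForm_of_conj (p := u₁) (q := -v₂) (r := u₂) (s := v₁) (c := 1)
      ?_ one_ne_zero ?_ (hasNormalForm_split (v₁ * u₁ + v₂ * u₂) (e / (v₁ * u₁ + v₂ * u₂)))
    · grind
    · ext i j
      fin_cases i <;> fin_cases j <;>
        simp [Matrix.mul_apply, Fin.sum_univ_three] <;> grind

theorem hasNormalForm_of_column (a b m n : ℂ) :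
    HasNormalForm !![m, n, 1; a, b, 0; 0, 0, 0] !![1, 0, 0; 0, 1, 0; 0, 0, 0] := by
  have key : HasNormalForm !![0, 0, 1; a, 0, 0; 0, 0, 0] !![1, 0, 0; 0, 1, 0; 0, 0, 0] := by
    by_cases ha : a = 0
    · subst ha
      refine of_swap (hasNormalForm_of_diagonal (P := 1) (Q := !![0, 0, 1; 0, 1, 0; 1, 0, 0])
        (D := ![1, 0, 0]) ?_ ?_ ?_ (by simp))
      · simp
      · simp [Matrix.det_fin_three]
      · ext i j
        fin_cases i <;> fin_cases j <;>
          simp [Matrix.mul_apply, Fin.sum_univ_three]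
    · refine of_mul_mul (P := !![a, 0, 0; 0, 1, 0; 0, 0, 1])
        (Q := !![a⁻¹, 0, 0; 0, 1, 0; 0, 0, a⁻¹]) (of_normalForm 12) ?_ ?_ ?_ ?_
      · simp [Matrix.det_fin_three] <;> grind
      · simp [Matrix.det_fin_three] <;> grind
      · ext i j
        fin_cases i <;> fin_cases j <;>
          simp [Matrix.mul_apply, Fin.sum_univ_three, normalForm] <;> grind
      · ext i j
        fin_cases i <;> fin_cases j <;>
          simp [Matrix.mul_apply, Fin.sum_univ_three, normalForm] <;> grind
  refine of_add_smul (-b) (of_mul_mul (P := 1) (Q := !![1, 0, 0; 0, 1, 0; b - m, -n, 1])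
    key ?_ ?_ ?_ ?_)
  · simp
  · simp [Matrix.det_fin_three]
  · ext i j
    fin_cases i <;> fin_cases j <;>
      simp [Matrix.mul_apply, Fin.sum_univ_three] <;> grind
  · ext i j
    fin_cases i <;> fin_cases j <;>
      simp [Matrix.mul_apply, Fin.sum_univ_three]

theorem hasNormalForm_of_row (a b m n : ℂ) :
    HasNormalForm !![m, a, 0; n, b, 0; 1, 0, 0] !![1, 0, 0; 0, 1, 0; 0, 0, 0] := by
  have key : HasNormalForm !![0, a, 0; 0, 0, 0; 1, 0, 0] !![1, 0, 0; 0, 1, 0; 0, 0, 0] := by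
    by_cases ha : a = 0
    · subst ha
      refine of_swap (hasNormalForm_of_diagonal (P := !![0, 0, 1; 0, 1, 0; 1, 0, 0]) (Q := 1)
        (D := ![1, 0, 0]) ?_ ?_ ?_ (by simp))
      · simp [Matrix.det_fin_three]
      · simp
      · ext i j
        fin_cases i <;> fin_cases j <;>
          simp [Matrix.mul_apply, Fin.sum_univ_three]
    · refine of_mul_mul (P := !![a⁻¹, 0, 0; 0, 1, 0; 0, 0, a⁻¹])
        (Q := !![a, 0, 0; 0, 1, 0; 0, 0, 1]) (of_normalForm 13) ?_ ?_ ?_ ?_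
      · simp [Matrix.det_fin_three] <;> grind
      · simp [Matrix.det_fin_three] <;> grind
      · ext i j
        fin_cases i <;> fin_cases j <;>
          simp [Matrix.mul_apply, Fin.sum_univ_three, normalForm] <;> grind
      · ext i j
        fin_cases i <;> fin_cases j <;>
          simp [Matrix.mul_apply, Fin.sum_univ_three, normalForm] <;> grind
  refine of_add_smul (-b) (of_mul_mul (P := !![1, 0, b - m; 0, 1, -n; 0, 0, 1]) (Q := 1)
    key ?_ ?_ ?_ ?_)
  · simp [Matrix.det_fin_three]
  · simp
  · ext i j
    fin_cases i <;> fin_cases j <;>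
      simp [Matrix.mul_apply, Fin.sum_univ_three] <;> grind
  · ext i j
    fin_cases i <;> fin_cases j <;>
      simp [Matrix.mul_apply, Fin.sum_univ_three]

theorem hasNormalForm_of_corner (a b m n : ℂ) :
    HasNormalForm !![m, n, 1; a, b, 0; 1, 0, 0] !![1, 0, 0; 0, 1, 0; 0, 0, 0] := by
  have key : HasNormalForm !![0, 0, 1; 0, 0, 0; 1, 0, 0] !![1, 0, 0; 0, 1, 0; 0, 0, 0] := by
    refine of_swap (of_mul_mul (P := !![1, 0, 0; 0, 0, 1; 0, 1, 0])
      (Q := !![0, 1, 0; 0, 0, 1; 1, 0, 0]) (of_normalForm 16) ?_ ?_ ?_ ?_)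
    · simp [Matrix.det_fin_three]
    · simp [Matrix.det_fin_three]
    · ext i j
      fin_cases i <;> fin_cases j <;>
        simp [Matrix.mul_apply, Fin.sum_univ_three, normalForm]
    · ext i j
      fin_cases i <;> fin_cases j <;>
        simp [Matrix.mul_apply, Fin.sum_univ_three, normalForm]
  refine of_add_smul (-b) (of_mul_mul (P := !![1, 0, 0; 0, 1, -a; 0, 0, 1])
    (Q := !![1, 0, 0; 0, 1, 0; b - m, -n, 1]) key ?_ ?_ ?_ ?_)
  · simp [Matrix.det_fin_three]
  · simp [Matrix.det_fin_three]
  · ext i j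
    fin_cases i <;> fin_cases j <;>
      simp [Matrix.mul_apply, Fin.sum_univ_three] <;> grind
  · ext i j
    fin_cases i <;> fin_cases j <;>
      simp [Matrix.mul_apply, Fin.sum_univ_three]

theorem hasNormalForm_of_skew (a b m n : ℂ) :
    HasNormalForm !![m, n, 1; a, b, 0; 0, 1, 0] !![1, 0, 0; 0, 1, 0; 0, 0, 0] := by
  have key : HasNormalForm !![0, 0, 1; a, 0, 0; 0, 1, 0] !![1, 0, 0; 0, 1, 0; 0, 0, 0] := by
    by_cases ha : a = 0
    · subst ha
      exact of_normalForm 14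
    · refine of_mul_mul (P := !![a, 0, 0; 0, 1, 0; 0, 0, 1])
        (Q := !![a⁻¹, 0, 0; 0, 1, 0; 0, 0, a⁻¹]) (of_normalForm 15) ?_ ?_ ?_ ?_
      · simp [Matrix.det_fin_three] <;> grind
      · simp [Matrix.det_fin_three] <;> grind
      · ext i j
        fin_cases i <;> fin_cases j <;>
          simp [Matrix.mul_apply, Fin.sum_univ_three, normalForm] <;> grind
      · ext i j
        fin_cases i <;> fin_cases j <;>
          simp [Matrix.mul_apply, Fin.sum_univ_three, normalForm] <;> grind
  refine of_mul_mul (P := !![1, 0, 0; 0, 1, -b; 0, 0, 1])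
    (Q := !![1, 0, 0; 0, 1, 0; -m, -n, 1]) key ?_ ?_ ?_ ?_
  · simp [Matrix.det_fin_three]
  · simp [Matrix.det_fin_three]
  · ext i j
    fin_cases i <;> fin_cases j <;>
      simp [Matrix.mul_apply, Fin.sum_univ_three]
  · ext i j
    fin_cases i <;> fin_cases j <;>
      simp [Matrix.mul_apply, Fin.sum_univ_three]

theorem hasNormalForm_of_corner_eq_zero (a b c d u₁ u₂ v₁ v₂ : ℂ) :
    HasNormalForm !![a, b, u₁; c, d, u₂; v₁, v₂, 0] !![1, 0, 0; 0, 1, 0; 0, 0, 0] := by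
  by_cases hu : u₁ = 0 ∧ u₂ = 0
  · obtain ⟨rfl, rfl⟩ := hu
    by_cases hv : v₁ = 0 ∧ v₂ = 0
    · obtain ⟨rfl, rfl⟩ := hv
      exact hasNormalForm_of_block a b c d 0
    · obtain ⟨w, z, h⟩ := exists_det_eq_one_fin_two hv
      refine hasNormalForm_of_conj (p := z) (q := -v₂) (r := -w) (s := v₁) (c := 1)
        ?_ one_ne_zero ?_ (hasNormalForm_of_row
          (v₁ * (a * -v₂ + b * v₁) + v₂ * (c * -v₂ + d * v₁))
          (w * (a * -v₂ + b * v₁) + z * (c * -v₂ + d * v₁))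
          (v₁ * (a * z + b * -w) + v₂ * (c * z + d * -w))
          (w * (a * z + b * -w) + z * (c * z + d * -w)))
      · grind
      · ext i j
        fin_cases i <;> fin_cases j <;>
          simp [Matrix.mul_apply, Fin.sum_univ_three] <;> grind
  · by_cases hs : v₁ * u₁ + v₂ * u₂ = 0
    · obtain ⟨t, rfl, rfl⟩ := eq_mul_of_dot_eq_zero hu hs
      obtain ⟨w, z, h⟩ := exists_det_eq_one_fin_two hu
      by_cases ht : t = 0
      · subst ht
        refine hasNormalForm_of_conj (p := u₁) (q := w) (r := u₂) (s := z) (c := 1)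
          ?_ one_ne_zero ?_ (hasNormalForm_of_column
            (u₁ * (c * u₁ + d * u₂) - u₂ * (a * u₁ + b * u₂))
            (u₁ * (c * w + d * z) - u₂ * (a * w + b * z))
            (z * (a * u₁ + b * u₂) - w * (c * u₁ + d * u₂))
            (z * (a * w + b * z) - w * (c * w + d * z)))
        · grind
        · ext i j
          fin_cases i <;> fin_cases j <;>
            simp [Matrix.mul_apply, Fin.sum_univ_three] <;> grind
      · refine hasNormalForm_of_conj (p := u₁) (q := w) (r := u₂) (s := z) (c := t⁻¹)
          ?_ (inv_ne_zero ht) ?_ (hasNormalForm_of_skew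
            (u₁ * (c * u₁ + d * u₂) - u₂ * (a * u₁ + b * u₂))
            (u₁ * (c * w + d * z) - u₂ * (a * w + b * z))
            (z * (a * u₁ + b * u₂) - w * (c * u₁ + d * u₂))
            (z * (a * w + b * z) - w * (c * w + d * z)))
        · grind
        · ext i j
          fin_cases i <;> fin_cases j <;>
            simp [Matrix.mul_apply, Fin.sum_univ_three] <;> grind
    · refine hasNormalForm_of_conj (p := u₁) (q := -v₂) (r := u₂) (s := v₁) (c := 1)
        ?_ one_ne_zero ?_ (hasNormalForm_of_corner
          ((u₁ * (c * u₁ + d * u₂) - u₂ * (a * u₁ + b * u₂)) / (v₁ * u₁ + v₂ * u₂))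
          ((u₁ * (c * -v₂ + d * v₁) - u₂ * (a * -v₂ + b * v₁)) / (v₁ * u₁ + v₂ * u₂))
          ((v₁ * (a * u₁ + b * u₂) + v₂ * (c * u₁ + d * u₂)) / (v₁ * u₁ + v₂ * u₂))
          ((v₁ * (a * -v₂ + b * v₁) + v₂ * (c * -v₂ + d * v₁)) / (v₁ * u₁ + v₂ * u₂)))
      · grind
      · ext i j
        fin_cases i <;> fin_cases j <;>
          simp [Matrix.mul_apply, Fin.sum_univ_three] <;> grind

/-- Pencils containing the rank-two matrix `E₁₁ + E₂₂`. -/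
theorem hasNormalForm_rank_two (A : Mat3) :
    HasNormalForm A !![1, 0, 0; 0, 1, 0; 0, 0, 0] := by
  rw [Matrix.eta_fin_three A]
  by_cases hd : A 2 2 = 0
  · rw [hd]
    exact hasNormalForm_of_corner_eq_zero _ _ _ _ _ _ _ _
  · refine of_mul_mul (P := !![1, 0, -(A 0 2 / A 2 2); 0, 1, -(A 1 2 / A 2 2); 0, 0, 1])
      (Q := !![1, 0, 0; 0, 1, 0; -(A 2 0 / A 2 2), -(A 2 1 / A 2 2), 1])
      (hasNormalForm_of_block (A 0 0 - A 0 2 * A 2 0 / A 2 2) (A 0 1 - A 0 2 * A 2 1 / A 2 2)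
        (A 1 0 - A 1 2 * A 2 0 / A 2 2) (A 1 1 - A 1 2 * A 2 1 / A 2 2) (A 2 2)) ?_ ?_ ?_ ?_
    · simp [Matrix.det_fin_three]
    · simp [Matrix.det_fin_three]
    · ext i j
      fin_cases i <;> fin_cases j <;>
        simp [Matrix.mul_apply, Fin.sum_univ_three] <;> grind
    · ext i j
      fin_cases i <;> fin_cases j <;>
        simp [Matrix.mul_apply, Fin.sum_univ_three]

theorem diagonal_fin_three (D : Fin 3 → ℂ) :
    (Matrix.diagonal D : Mat3) = !![D 0, 0, 0; 0, D 1, 0; 0, 0, D 2] := by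
  ext i j
  fin_cases i <;> fin_cases j <;> rfl

theorem hasNormalForm_zero_left (B : Mat3) : HasNormalForm 0 B := by
  obtain ⟨P, Q, D, hP, hQ, hD, h⟩ := exists_mul_mul_eq_diagonal B
  rw [diagonal_fin_three] at h
  rcases hD 0 with h0 | h0 <;> rcases hD 1 with h1 | h1 <;> rcases hD 2 with h2 | h2
  · refine of_mul_mul (of_normalForm 0) hP hQ (by simp [normalForm]) ?_
    rw [h, h0, h1, h2, fin_three_zero]
    rfl
  · exact hasNormalForm_of_diagonal hP hQ h (by simp [*])
  · exact hasNormalForm_of_diagonal hP hQ h (by simp [*])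
  · refine of_mul_mul (A' := 0) ?_ hP hQ (by simp) h
    rw [h0, h1, h2]
    refine of_mul_mul (P := !![0, 1, 0; 0, 0, 1; 1, 0, 0]) (Q := !![0, 0, 1; 1, 0, 0; 0, 1, 0])
      (hasNormalForm_rank_two 0) ?_ ?_ ?_ ?_
    · simp [Matrix.det_fin_three]
    · simp [Matrix.det_fin_three]
    · ext i j
      fin_cases i <;> fin_cases j <;>
        simp [Matrix.mul_apply]
    · ext i j
      fin_cases i <;> fin_cases j <;>
        simp [Matrix.mul_apply, Fin.sum_univ_three]
  · exact hasNormalForm_of_diagonal hP hQ h (by simp [*])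
  · refine of_mul_mul (A' := 0) ?_ hP hQ (by simp) h
    rw [h0, h1, h2]
    refine of_mul_mul (P := !![1, 0, 0; 0, 0, 1; 0, 1, 0]) (Q := !![1, 0, 0; 0, 0, 1; 0, 1, 0])
      (hasNormalForm_rank_two 0) ?_ ?_ ?_ ?_
    · simp [Matrix.det_fin_three]
    · simp [Matrix.det_fin_three]
    · ext i j
      fin_cases i <;> fin_cases j <;>
        simp [Matrix.mul_apply]
    · ext i j
      fin_cases i <;> fin_cases j <;>
        simp [Matrix.mul_apply, Fin.sum_univ_three]
  · refine of_mul_mul (A' := 0) ?_ hP hQ (by simp) h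
    rw [h0, h1, h2]
    exact hasNormalForm_rank_two 0
  · refine of_mul_mul (of_normalForm 11) hP hQ (by simp [normalForm]) ?_
    rw [h, h0, h1, h2]
    rfl

theorem hasNormalForm_of_det_eq_zero (A : Mat3) {B : Mat3} (hB : B.det = 0) :
    HasNormalForm A B := by
  obtain ⟨P, Q, D, hP, hQ, hD, h⟩ := exists_mul_mul_eq_diagonal B
  have hdet : D 0 * D 1 * D 2 = 0 := by
    rw [← Fin.prod_univ_three, ← Matrix.det_diagonal, ← h, Matrix.det_mul, Matrix.det_mul, hB]
    simp
  rw [diagonal_fin_three] at h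
  rcases hD 0 with h0 | h0 <;> rcases hD 1 with h1 | h1 <;> rcases hD 2 with h2 | h2
  · refine of_swap (of_mul_mul (A' := 0) (hasNormalForm_zero_left _) hP hQ ?_ rfl)
    rw [h, h0, h1, h2, fin_three_zero]
  · exact hasNormalForm_of_diagonal hP hQ h (by simp [*])
  · exact hasNormalForm_of_diagonal hP hQ h (by simp [*])
  · refine of_mul_mul ?_ hP hQ rfl h
    rw [h0, h1, h2]
    refine of_mul_mul (P := !![0, 1, 0; 0, 0, 1; 1, 0, 0]) (Q := !![0, 0, 1; 1, 0, 0; 0, 1, 0])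
      (hasNormalForm_rank_two _) ?_ ?_ rfl ?_
    · simp [Matrix.det_fin_three]
    · simp [Matrix.det_fin_three]
    · ext i j
      fin_cases i <;> fin_cases j <;>
        simp [Matrix.mul_apply, Fin.sum_univ_three]
  · exact hasNormalForm_of_diagonal hP hQ h (by simp [*])
  · refine of_mul_mul ?_ hP hQ rfl h
    rw [h0, h1, h2]
    refine of_mul_mul (P := !![1, 0, 0; 0, 0, 1; 0, 1, 0]) (Q := !![1, 0, 0; 0, 0, 1; 0, 1, 0])
      (hasNormalForm_rank_two _) ?_ ?_ rfl ?_
    · simp [Matrix.det_fin_three]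
    · simp [Matrix.det_fin_three]
    · ext i j
      fin_cases i <;> fin_cases j <;>
        simp [Matrix.mul_apply, Fin.sum_univ_three]
  · refine of_mul_mul ?_ hP hQ rfl h
    rw [h0, h1, h2]
    exact hasNormalForm_rank_two _
  · simp [h0, h1, h2] at hdet

theorem exists_det_add_smul_eq_zero {n : ℕ} (hn : n ≠ 0) (A : Matrix (Fin n) (Fin n) ℂ)
    {B : Matrix (Fin n) (Fin n) ℂ} (hB : B.det ≠ 0) : ∃ s : ℂ, (A + s • B).det = 0 := by
  have : NeZero n := ⟨hn⟩
  obtain ⟨s, hs⟩ := IsAlgClosed.exists_root (A * B⁻¹).charpoly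
    (by simpa [Matrix.charpoly_degree_eq_dim] using hn)
  rw [Polynomial.IsRoot, Matrix.eval_charpoly] at hs
  refine ⟨-s, ?_⟩
  have h : A + -s • B = -((Matrix.scalar (Fin n) s - A * B⁻¹) * B) := by
    rw [sub_mul, Matrix.nonsing_inv_mul_cancel_right _ _ hB.isUnit, Matrix.scalar_apply,
      ← Matrix.smul_one_eq_diagonal, Matrix.smul_mul, one_mul]
    module
  rw [h, Matrix.det_neg, Matrix.det_mul, hs]
  simp

/-- Every pencil of `3 × 3` matrices is equivalent to one of the normal forms. -/
theorem hasNormalForm (A B : Mat3) : HasNormalForm A B := by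
  by_cases hB : B.det = 0
  · exact hasNormalForm_of_det_eq_zero A hB
  · obtain ⟨s, hs⟩ := exists_det_add_smul_eq_zero three_ne_zero A hB
    exact of_add_smul s (of_swap (hasNormalForm_of_det_eq_zero B hs))

/-- The matrix is a column times a row, that is, it has rank at most one. -/
def IsOuter (M : Mat3) : Prop :=
  ∃ u v, M = Matrix.vecMulVec u v

theorem IsOuter.minor {M : Mat3} (h : IsOuter M) (i j k l : Fin 3) :
    M i k * M j l = M i l * M j k := by
  obtain ⟨u, v, rfl⟩ := h
  simp only [Matrix.vecMulVec_apply]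
  ring

theorem IsOuter.mul_mul {M : Mat3} (h : IsOuter M) (P Q : Mat3) : IsOuter (P * M * Q) := by
  obtain ⟨u, v, rfl⟩ := h
  exact ⟨P.mulVec u, Matrix.vecMul v Q, by rw [Matrix.mul_vecMulVec, Matrix.vecMulVec_mul]⟩

/-- The matrices spanning the pencil are linearly dependent. -/
def IsDependent (A B : Mat3) : Prop :=
  ∃ x y : ℂ, ¬(x = 0 ∧ y = 0) ∧ x • A + y • B = 0

/-- The pencil has a common kernel vector. -/
def HasRightKernel (A B : Mat3) : Prop :=
  ∃ v, v ≠ 0 ∧ A.mulVec v = 0 ∧ B.mulVec v = 0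

/-- The transposed pencil has a common kernel vector. -/
def HasLeftKernel (A B : Mat3) : Prop :=
  ∃ v, v ≠ 0 ∧ Matrix.vecMul v A = 0 ∧ Matrix.vecMul v B = 0

/-- All rows of all members of the pencil are proportional. -/
def HasCommonRow (A B : Mat3) : Prop :=
  ∃ u₁ u₂ v, A = Matrix.vecMulVec u₁ v ∧ B = Matrix.vecMulVec u₂ v

/-- All columns of all members of the pencil are proportional. -/
def HasCommonColumn (A B : Mat3) : Prop :=
  ∃ u v₁ v₂, A = Matrix.vecMulVec u v₁ ∧ B = Matrix.vecMulVec u v₂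

/-- The pencil has a nontrivial member of rank at most one. -/
def HasOuter (A B : Mat3) : Prop :=
  ∃ x y : ℂ, ¬(x = 0 ∧ y = 0) ∧ IsOuter (x • A + y • B)

/-- The pencil has two independent members of rank at most one. -/
def HasTwoOuter (A B : Mat3) : Prop :=
  ∃ x₁ y₁ x₂ y₂ : ℂ, x₁ * y₂ - y₁ * x₂ ≠ 0 ∧ IsOuter (x₁ • A + y₁ • B) ∧ IsOuter (x₂ • A + y₂ • B)

/-- All members of the pencil are singular. -/
def IsSingularPencil (A B : Mat3) : Prop :=
  ∀ x y : ℂ, (x • A + y • B).det = 0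

/-- The pencil has two independent singular members. -/
def HasTwoSingular (A B : Mat3) : Prop :=
  ∃ x₁ y₁ x₂ y₂ : ℂ, x₁ * y₂ - y₁ * x₂ ≠ 0 ∧
    (x₁ • A + y₁ • B).det = 0 ∧ (x₂ • A + y₂ • B).det = 0

/-- The pencil has three pairwise independent singular members. -/
def HasThreeSingular (A B : Mat3) : Prop :=
  ∃ x₁ y₁ x₂ y₂ x₃ y₃ : ℂ, x₁ * y₂ - y₁ * x₂ ≠ 0 ∧ x₁ * y₃ - y₁ * x₃ ≠ 0 ∧
    x₂ * y₃ - y₂ * x₃ ≠ 0 ∧ (x₁ • A + y₁ • B).det = 0 ∧ (x₂ • A + y₂ • B).det = 0 ∧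
      (x₃ • A + y₃ • B).det = 0

namespace PencilEquiv

variable {A B A' B' : Mat3}

theorem ne_zero_of_det_ne_zero {a b c d x y : ℂ} (hd : a * d - b * c ≠ 0)
    (h : ¬(x = 0 ∧ y = 0)) : ¬(x * a + y * c = 0 ∧ x * b + y * d = 0) := by
  rintro ⟨h₁, h₂⟩
  have hx : x * (a * d - b * c) = 0 := by linear_combination d * h₁ - c * h₂
  have hy : y * (a * d - b * c) = 0 := by linear_combination a * h₂ - b * h₁
  exact h ⟨(mul_eq_zero.1 hx).resolve_right hd, (mul_eq_zero.1 hy).resolve_right hd⟩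

theorem cross_ne_zero {a b c d x y x' y' : ℂ} (hd : a * d - b * c ≠ 0)
    (h : x * y' - y * x' ≠ 0) :
    (x * a + y * c) * (x' * b + y' * d) - (x * b + y * d) * (x' * a + y' * c) ≠ 0 := by
  convert mul_ne_zero h hd using 1
  ring

/-- The members of equivalent pencils correspond through a substitution of the parameters and
multiplication by invertible matrices. -/
theorem exists_member (h : PencilEquiv A B A' B') :
    ∃ (P Q : Mat3) (a b c d : ℂ), P.det ≠ 0 ∧ Q.det ≠ 0 ∧ a * d - b * c ≠ 0 ∧
      ∀ x y : ℂ, P * (x • A' + y • B') * Q = (x * a + y * c) • A + (x * b + y * d) • B := by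
  obtain ⟨P, Q, a, b, c, d, hP, hQ, hd, rfl, rfl⟩ := h
  refine ⟨P⁻¹, Q⁻¹, a, b, c, d, (Matrix.isUnit_nonsing_inv_det _ hP.isUnit).ne_zero,
    (Matrix.isUnit_nonsing_inv_det _ hQ.isUnit).ne_zero, hd, fun x y => ?_⟩
  have h : x • (P * (a • A + b • B) * Q) + y • (P * (c • A + d • B) * Q) =
      P * ((x * a + y * c) • A + (x * b + y * d) • B) * Q := by
    simp only [Matrix.mul_add, Matrix.add_mul, Matrix.mul_smul, Matrix.smul_mul]
    module
  rw [h, Matrix.mul_assoc P _ Q, Matrix.nonsing_inv_mul_cancel_left _ _ hP.isUnit,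
    Matrix.mul_nonsing_inv_cancel_right _ _ hQ.isUnit]

theorem eq_zero_iff (h : PencilEquiv A B A' B') : A = 0 ∧ B = 0 ↔ A' = 0 ∧ B' = 0 := by
  have key {A B A' B' : Mat3} (h : PencilEquiv A B A' B') : A = 0 ∧ B = 0 → A' = 0 ∧ B' = 0 := by
    rintro ⟨rfl, rfl⟩
    obtain ⟨P, Q, a, b, c, d, hP, hQ, hd, rfl, rfl⟩ := h
    simp
  exact ⟨key h, key h.symm⟩

theorem isDependent_iff (h : PencilEquiv A B A' B') : IsDependent A B ↔ IsDependent A' B' := by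
  have key {A B A' B' : Mat3} (h : PencilEquiv A B A' B') :
      IsDependent A' B' → IsDependent A B := by
    rintro ⟨x, y, hxy, h0⟩
    obtain ⟨P, Q, a, b, c, d, hP, hQ, hd, hm⟩ := h.exists_member
    exact ⟨_, _, ne_zero_of_det_ne_zero hd hxy, by rw [← hm, h0]; simp⟩
  exact ⟨key h.symm, key h⟩

theorem hasRightKernel_iff (h : PencilEquiv A B A' B') :
    HasRightKernel A B ↔ HasRightKernel A' B' := by
  have key {A B A' B' : Mat3} (h : PencilEquiv A B A' B') :
      HasRightKernel A B → HasRightKernel A' B' := by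
    rintro ⟨v, hv, hA, hB⟩
    obtain ⟨P, Q, a, b, c, d, hP, hQ, hd, rfl, rfl⟩ := h
    refine ⟨Q⁻¹.mulVec v, ?_, ?_, ?_⟩
    · intro h0
      apply hv
      rw [← Matrix.one_mulVec v, ← Matrix.mul_nonsing_inv Q hQ.isUnit, ← Matrix.mulVec_mulVec, h0,
        Matrix.mulVec_zero]
    all_goals
      rw [Matrix.mulVec_mulVec, Matrix.mul_nonsing_inv_cancel_right _ _ hQ.isUnit,
        ← Matrix.mulVec_mulVec, Matrix.add_mulVec, Matrix.smul_mulVec, Matrix.smul_mulVec, hA, hB]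
      simp
  exact ⟨key h, key h.symm⟩

theorem hasLeftKernel_iff (h : PencilEquiv A B A' B') :
    HasLeftKernel A B ↔ HasLeftKernel A' B' := by
  have key {A B A' B' : Mat3} (h : PencilEquiv A B A' B') :
      HasLeftKernel A B → HasLeftKernel A' B' := by
    rintro ⟨v, hv, hA, hB⟩
    obtain ⟨P, Q, a, b, c, d, hP, hQ, hd, rfl, rfl⟩ := h
    refine ⟨Matrix.vecMul v P⁻¹, ?_, ?_, ?_⟩
    · intro h0
      apply hv
      rw [← Matrix.vecMul_one v, ← Matrix.nonsing_inv_mul P hP.isUnit, ← Matrix.vecMul_vecMul, h0,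
        Matrix.zero_vecMul]
    all_goals
      rw [Matrix.vecMul_vecMul, Matrix.mul_assoc, Matrix.nonsing_inv_mul_cancel_left _ _ hP.isUnit,
        ← Matrix.vecMul_vecMul, Matrix.vecMul_add, Matrix.vecMul_smul, Matrix.vecMul_smul, hA, hB]
      simp
  exact ⟨key h, key h.symm⟩

theorem hasCommonRow_iff (h : PencilEquiv A B A' B') :
    HasCommonRow A B ↔ HasCommonRow A' B' := by
  have key {A B A' B' : Mat3} (h : PencilEquiv A B A' B') :
      HasCommonRow A B → HasCommonRow A' B' := by
    rintro ⟨u, u', v, rfl, rfl⟩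
    obtain ⟨P, Q, a, b, c, d, hP, hQ, hd, rfl, rfl⟩ := h
    refine ⟨P.mulVec (a • u + b • u'), P.mulVec (c • u + d • u'), Matrix.vecMul v Q, ?_, ?_⟩ <;>
      rw [← Matrix.smul_vecMulVec, ← Matrix.smul_vecMulVec, ← Matrix.add_vecMulVec,
        Matrix.mul_vecMulVec, Matrix.vecMulVec_mul]
  exact ⟨key h, key h.symm⟩

theorem hasCommonColumn_iff (h : PencilEquiv A B A' B') :
    HasCommonColumn A B ↔ HasCommonColumn A' B' := by
  have key {A B A' B' : Mat3} (h : PencilEquiv A B A' B') :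
      HasCommonColumn A B → HasCommonColumn A' B' := by
    rintro ⟨u, v, v', rfl, rfl⟩
    obtain ⟨P, Q, a, b, c, d, hP, hQ, hd, rfl, rfl⟩ := h
    refine ⟨P.mulVec u, Matrix.vecMul (a • v + b • v') Q, Matrix.vecMul (c • v + d • v') Q,
      ?_, ?_⟩ <;>
      rw [← Matrix.vecMulVec_smul, ← Matrix.vecMulVec_smul, ← Matrix.vecMulVec_add,
        Matrix.mul_vecMulVec, Matrix.vecMulVec_mul]
  exact ⟨key h, key h.symm⟩

theorem hasOuter_iff (h : PencilEquiv A B A' B') : HasOuter A B ↔ HasOuter A' B' := by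
  have key {A B A' B' : Mat3} (h : PencilEquiv A B A' B') : HasOuter A' B' → HasOuter A B := by
    rintro ⟨x, y, hxy, h0⟩
    obtain ⟨P, Q, a, b, c, d, hP, hQ, hd, hm⟩ := h.exists_member
    exact ⟨_, _, ne_zero_of_det_ne_zero hd hxy, hm x y ▸ h0.mul_mul P Q⟩
  exact ⟨key h.symm, key h⟩

theorem hasTwoOuter_iff (h : PencilEquiv A B A' B') : HasTwoOuter A B ↔ HasTwoOuter A' B' := by
  have key {A B A' B' : Mat3} (h : PencilEquiv A B A' B') :
      HasTwoOuter A' B' → HasTwoOuter A B := by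
    rintro ⟨x, y, x', y', hxy, h0, h1⟩
    obtain ⟨P, Q, a, b, c, d, hP, hQ, hd, hm⟩ := h.exists_member
    exact ⟨_, _, _, _, cross_ne_zero hd hxy, hm x y ▸ h0.mul_mul P Q,
      hm x' y' ▸ h1.mul_mul P Q⟩
  exact ⟨key h.symm, key h⟩

theorem isSingularPencil_iff (h : PencilEquiv A B A' B') :
    IsSingularPencil A B ↔ IsSingularPencil A' B' := by
  have key {A B A' B' : Mat3} (h : PencilEquiv A B A' B') :
      IsSingularPencil A B → IsSingularPencil A' B' := by
    intro h0 x y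
    obtain ⟨P, Q, a, b, c, d, hP, hQ, hd, hm⟩ := h.exists_member
    have h1 := congrArg Matrix.det (hm x y)
    rw [h0, Matrix.det_mul, Matrix.det_mul] at h1
    simpa [hP, hQ] using h1
  exact ⟨key h, key h.symm⟩

theorem hasTwoSingular_iff (h : PencilEquiv A B A' B') :
    HasTwoSingular A B ↔ HasTwoSingular A' B' := by
  have key {A B A' B' : Mat3} (h : PencilEquiv A B A' B') :
      HasTwoSingular A' B' → HasTwoSingular A B := by
    rintro ⟨x, y, x', y', hxy, h0, h1⟩
    obtain ⟨P, Q, a, b, c, d, hP, hQ, hd, hm⟩ := h.exists_member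
    refine ⟨_, _, _, _, cross_ne_zero hd hxy, ?_, ?_⟩ <;>
      rw [← hm, Matrix.det_mul, Matrix.det_mul] <;> simp [h0, h1]
  exact ⟨key h.symm, key h⟩

theorem hasThreeSingular_iff (h : PencilEquiv A B A' B') :
    HasThreeSingular A B ↔ HasThreeSingular A' B' := by
  have key {A B A' B' : Mat3} (h : PencilEquiv A B A' B') :
      HasThreeSingular A' B' → HasThreeSingular A B := by
    rintro ⟨x, y, x', y', x'', y'', h₁, h₂, h₃, h0, h1, h2⟩
    obtain ⟨P, Q, a, b, c, d, hP, hQ, hd, hm⟩ := h.exists_member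
    refine ⟨_, _, _, _, _, _, cross_ne_zero hd h₁, cross_ne_zero hd h₂, cross_ne_zero hd h₃,
      ?_, ?_, ?_⟩ <;>
      rw [← hm, Matrix.det_mul, Matrix.det_mul] <;> simp [h0, h1, h2]
  exact ⟨key h.symm, key h⟩

end PencilEquiv

open Classical in
/-- The index of the normal form of a pencil, computed from invariants of the pencil. -/
def pencilIndex (A B : Mat3) : Fin 18 :=
  if IsDependent A B then
    if A = 0 ∧ B = 0 then 0
    else if HasCommonRow A B then 1
    else if IsSingularPencil A B then 10
    else 11
  else if HasRightKernel A B then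
    if HasLeftKernel A B then
      if HasCommonRow A B then 3
      else if HasCommonColumn A B then 2
      else if HasTwoOuter A B then 5
      else 4
    else if HasOuter A B then 7
    else 13
  else if HasLeftKernel A B then
    if HasOuter A B then 6 else 12
  else if HasOuter A B then
    if HasTwoSingular A B then 9 else 8
  else if IsSingularPencil A B then 14
  else if HasThreeSingular A B then 17
  else if HasTwoSingular A B then 16
  else 15

theorem PencilEquiv.pencilIndex_eq {A B A' B' : Mat3} (h : PencilEquiv A B A' B') :
    pencilIndex A B = pencilIndex A' B' := by
  simp only [pencilIndex, h.eq_zero_iff]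
  rw [propext h.isDependent_iff,
    propext h.hasRightKernel_iff, propext h.hasLeftKernel_iff, propext h.hasCommonRow_iff,
    propext h.hasCommonColumn_iff, propext h.hasOuter_iff, propext h.hasTwoOuter_iff,
    propext h.isSingularPencil_iff, propext h.hasTwoSingular_iff,
    propext h.hasThreeSingular_iff]

theorem isDependent_normalForm :
    ∀ i ∈ ({0, 1, 10, 11} : Finset (Fin 18)),
      IsDependent (normalForm i).1 (normalForm i).2 := by
  intro i hi
  refine ⟨1, 0, by simp, ?_⟩
  fin_cases hi <;> simp [normalForm]

theorem not_isDependent_normalForm :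
    ∀ i ∈ ({2, 3, 4, 5, 6, 7, 8, 9, 12, 13, 14, 15, 16, 17} : Finset (Fin 18)),
      ¬IsDependent (normalForm i).1 (normalForm i).2 := by
  rintro i hi ⟨x, y, hxy, h⟩
  fin_cases hi <;>
    simp [normalForm, ← Matrix.ext_iff, Fin.forall_fin_succ] at h <;> grind

theorem hasRightKernel_normalForm :
    ∀ i ∈ ({2, 3, 4, 5, 7, 13} : Finset (Fin 18)),
      HasRightKernel (normalForm i).1 (normalForm i).2 := by
  intro i hi
  fin_cases hi
  · refine ⟨![0, 0, 1], by simp, ?_, ?_⟩ <;> ext j <;> fin_cases j <;>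
      simp [normalForm, Matrix.mulVec, dotProduct, Fin.sum_univ_three]
  · refine ⟨![0, 0, 1], by simp, ?_, ?_⟩ <;> ext j <;> fin_cases j <;>
      simp [normalForm, Matrix.mulVec, dotProduct, Fin.sum_univ_three]
  · refine ⟨![0, 0, 1], by simp, ?_, ?_⟩ <;> ext j <;> fin_cases j <;>
      simp [normalForm, Matrix.mulVec, dotProduct, Fin.sum_univ_three]
  · refine ⟨![0, 1, 0], by simp, ?_, ?_⟩ <;> ext j <;> fin_cases j <;>
      simp [normalForm, Matrix.mulVec, dotProduct, Fin.sum_univ_three]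
  · refine ⟨![0, 1, 0], by simp, ?_, ?_⟩ <;> ext j <;> fin_cases j <;>
      simp [normalForm, Matrix.mulVec, dotProduct, Fin.sum_univ_three]
  · refine ⟨![0, 0, 1], by simp, ?_, ?_⟩ <;> ext j <;> fin_cases j <;>
      simp [normalForm, Matrix.mulVec, dotProduct, Fin.sum_univ_three]

theorem not_hasRightKernel_normalForm :
    ∀ i ∈ ({6, 8, 9, 12, 14, 15, 16, 17} : Finset (Fin 18)),
      ¬HasRightKernel (normalForm i).1 (normalForm i).2 := by
  rintro i hi ⟨v, hv, hA, hB⟩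
  apply hv
  simp only [funext_iff, Matrix.mulVec, dotProduct, Fin.sum_univ_three] at hA hB ⊢
  fin_cases hi <;> simp [normalForm, Fin.forall_fin_succ] at hA hB ⊢ <;> grind

theorem hasLeftKernel_normalForm :
    ∀ i ∈ ({2, 3, 4, 5, 6, 12} : Finset (Fin 18)),
      HasLeftKernel (normalForm i).1 (normalForm i).2 := by
  intro i hi
  fin_cases hi
  · exact ⟨![0, 0, 1], by simp, by simp [normalForm], by simp [normalForm]⟩
  · exact ⟨![0, 0, 1], by simp, by simp [normalForm], by simp [normalForm]⟩
  · exact ⟨![0, 0, 1], by simp, by simp [normalForm], by simp [normalForm]⟩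
  · exact ⟨![0, 1, 0], by simp, by simp [normalForm], by simp [normalForm]⟩
  · exact ⟨![0, 1, 0], by simp, by simp [normalForm], by simp [normalForm]⟩
  · exact ⟨![0, 0, 1], by simp, by simp [normalForm], by simp [normalForm]⟩

theorem not_hasLeftKernel_normalForm :
    ∀ i ∈ ({7, 8, 9, 13, 14, 15, 16, 17} : Finset (Fin 18)),
      ¬HasLeftKernel (normalForm i).1 (normalForm i).2 := by
  rintro i hi ⟨v, hv, hA, hB⟩
  apply hv
  simp only [funext_iff, Matrix.vecMul, dotProduct, Fin.sum_univ_three] at hA hB ⊢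
  fin_cases hi <;> simp [normalForm, Fin.forall_fin_succ] at hA hB ⊢ <;> grind

theorem hasCommonRow_normalForm :
    ∀ i ∈ ({1, 3} : Finset (Fin 18)), HasCommonRow (normalForm i).1 (normalForm i).2 := by
  intro i hi
  fin_cases hi
  · refine ⟨0, ![1, 0, 0], ![1, 0, 0], ?_, ?_⟩ <;> ext j k <;>
      fin_cases j <;> fin_cases k <;> simp [normalForm, Matrix.vecMulVec_apply]
  · refine ⟨![0, 1, 0], ![1, 0, 0], ![1, 0, 0], ?_, ?_⟩ <;> ext j k <;>
      fin_cases j <;> fin_cases k <;> simp [normalForm, Matrix.vecMulVec_apply]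

theorem HasCommonRow.minor {A B : Mat3} (h : HasCommonRow A B) (i j k l : Fin 3) :
    A i k * B j l = A i l * B j k := by
  obtain ⟨u, u', v, rfl, rfl⟩ := h
  simp only [Matrix.vecMulVec_apply]
  ring

theorem HasCommonRow.isOuter_left {A B : Mat3} (h : HasCommonRow A B) : IsOuter A := by
  obtain ⟨u, _, v, hA, _⟩ := h
  exact ⟨u, v, hA⟩

theorem HasCommonRow.isOuter_right {A B : Mat3} (h : HasCommonRow A B) : IsOuter B := by
  obtain ⟨_, u, v, _, hB⟩ := h
  exact ⟨u, v, hB⟩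

theorem not_hasCommonRow_normalForm :
    ∀ i ∈ ({2, 4, 5, 10, 11} : Finset (Fin 18)),
      ¬HasCommonRow (normalForm i).1 (normalForm i).2 := by
  intro i hi h
  fin_cases hi
  · simpa [normalForm] using h.minor 0 0 0 1
  · simpa [normalForm] using h.isOuter_left.minor 0 1 0 1
  · simpa [normalForm] using h.minor 2 0 0 2
  · simpa [normalForm] using h.isOuter_right.minor 0 1 0 1
  · simpa [normalForm] using h.isOuter_right.minor 0 1 0 1

theorem hasCommonColumn_normalForm :
    HasCommonColumn (normalForm 2).1 (normalForm 2).2 := by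
  refine ⟨![1, 0, 0], ![0, 1, 0], ![1, 0, 0], ?_, ?_⟩ <;> ext j k <;>
    fin_cases j <;> fin_cases k <;> simp [normalForm, Matrix.vecMulVec_apply]

theorem HasCommonColumn.minor {A B : Mat3} (h : HasCommonColumn A B) (i j k l : Fin 3) :
    A i k * B j l = A j k * B i l := by
  obtain ⟨u, v, v', rfl, rfl⟩ := h
  simp only [Matrix.vecMulVec_apply]
  ring

theorem not_hasCommonColumn_normalForm :
    ∀ i ∈ ({4, 5} : Finset (Fin 18)), ¬HasCommonColumn (normalForm i).1 (normalForm i).2 := by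
  intro i hi h
  fin_cases hi
  · simpa [normalForm] using h.minor 0 1 0 0
  · simpa [normalForm] using h.minor 0 2 2 0

theorem isOuter_single : IsOuter !![1, 0, 0; 0, 0, 0; 0, 0, 0] := by
  refine ⟨![1, 0, 0], ![1, 0, 0], ?_⟩
  ext j k
  fin_cases j <;> fin_cases k <;> simp [Matrix.vecMulVec_apply]

theorem hasOuter_normalForm :
    ∀ i ∈ ({6, 7, 8, 9} : Finset (Fin 18)), HasOuter (normalForm i).1 (normalForm i).2 := by
  intro i hi
  refine ⟨0, 1, by simp, ?_⟩
  rw [zero_smul, zero_add, one_smul]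
  fin_cases hi <;> exact isOuter_single

theorem not_hasOuter_normalForm :
    ∀ i ∈ ({12, 13, 14, 15, 16, 17} : Finset (Fin 18)),
      ¬HasOuter (normalForm i).1 (normalForm i).2 := by
  rintro i hi ⟨x, y, hxy, h⟩
  have h₁ := h.minor 0 1 0 1
  have h₂ := h.minor 0 2 0 2
  have h₃ := h.minor 1 2 1 2
  have h₄ := h.minor 0 1 0 2
  have h₅ := h.minor 0 2 0 1
  have h₆ := h.minor 0 2 1 2
  have h₇ := h.minor 0 1 1 2
  have h₈ := h.minor 1 2 0 1
  fin_cases hi <;> simp [normalForm] at h₁ h₂ h₃ h₄ h₅ h₆ h₇ h₈ <;> grind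

theorem hasTwoOuter_normalForm : HasTwoOuter (normalForm 5).1 (normalForm 5).2 := by
  refine ⟨0, 1, 1, 0, by simp, ?_, ?_⟩
  · simpa [normalForm] using isOuter_single
  · refine ⟨![0, 0, 1], ![0, 0, 1], ?_⟩
    ext j k
    fin_cases j <;> fin_cases k <;> simp [normalForm, Matrix.vecMulVec_apply]

theorem not_hasTwoOuter_normalForm : ¬HasTwoOuter (normalForm 4).1 (normalForm 4).2 := by
  rintro ⟨x, y, x', y', h, h₁, h₂⟩
  have h₃ := h₁.minor 0 1 0 1
  have h₄ := h₂.minor 0 1 0 1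
  simp [normalForm] at h₃ h₄
  simp [h₃, h₄] at h

theorem isSingularPencil_normalForm :
    ∀ i ∈ ({10, 14} : Finset (Fin 18)), IsSingularPencil (normalForm i).1 (normalForm i).2 := by
  intro i hi x y
  fin_cases hi <;> simp [normalForm, Matrix.det_fin_three]

theorem not_isSingularPencil_normalForm :
    ∀ i ∈ ({11, 15, 16, 17} : Finset (Fin 18)),
      ¬IsSingularPencil (normalForm i).1 (normalForm i).2 := by
  intro i hi h
  fin_cases hi
  · simpa [normalForm, Matrix.det_fin_three] using h 0 1
  · simpa [normalForm, Matrix.det_fin_three] using h 1 0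
  · simpa [normalForm, Matrix.det_fin_three] using h 1 1
  · simpa [normalForm, Matrix.det_fin_three] using h 1 1

theorem hasTwoSingular_normalForm :
    ∀ i ∈ ({9, 16} : Finset (Fin 18)), HasTwoSingular (normalForm i).1 (normalForm i).2 := by
  intro i hi
  refine ⟨0, 1, 1, 0, by simp, ?_, ?_⟩ <;> fin_cases hi <;>
    simp [normalForm, Matrix.det_fin_three]

theorem not_hasTwoSingular_normalForm :
    ∀ i ∈ ({8, 15} : Finset (Fin 18)), ¬HasTwoSingular (normalForm i).1 (normalForm i).2 := by
  rintro i hi ⟨x, y, x', y', h, h₁, h₂⟩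
  fin_cases hi <;> simp [normalForm, Matrix.det_fin_three] at h₁ h₂ <;> grind

theorem hasThreeSingular_normalForm :
    HasThreeSingular (normalForm 17).1 (normalForm 17).2 := by
  refine ⟨0, 1, 1, 0, 1, -1, by simp, by simp, by simp, ?_, ?_, ?_⟩ <;>
    simp [normalForm, Matrix.det_fin_three]

theorem not_hasThreeSingular_normalForm :
    ∀ i ∈ ({15, 16} : Finset (Fin 18)),
      ¬HasThreeSingular (normalForm i).1 (normalForm i).2 := by
  rintro i hi ⟨x, y, x', y', x'', y'', h, h', h'', h₁, h₂, h₃⟩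
  fin_cases hi <;> simp [normalForm, Matrix.det_fin_three] at h₁ h₂ h₃ <;> grind

theorem normalForm_ne_zero :
    ∀ i ∈ ({1, 10, 11} : Finset (Fin 18)), ¬((normalForm i).1 = 0 ∧ (normalForm i).2 = 0) := by
  rintro i hi ⟨-, h⟩
  have h₀ := congr_fun (congr_fun h 0) 0
  fin_cases hi <;> simp [normalForm] at h₀

theorem pencilIndex_normalForm (i : Fin 18) :
    pencilIndex (normalForm i).1 (normalForm i).2 = i := by
  obtain rfl | hi := eq_or_ne i 0
  · rw [pencilIndex, if_pos (isDependent_normalForm 0 (by simp)), if_pos ⟨rfl, rfl⟩]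
  fin_cases i <;> first
    | exact absurd rfl hi
    | simp [pencilIndex, isDependent_normalForm, not_isDependent_normalForm,
      hasRightKernel_normalForm, not_hasRightKernel_normalForm, hasLeftKernel_normalForm,
      not_hasLeftKernel_normalForm, hasCommonRow_normalForm, not_hasCommonRow_normalForm,
      hasCommonColumn_normalForm, not_hasCommonColumn_normalForm, hasOuter_normalForm,
      not_hasOuter_normalForm, hasTwoOuter_normalForm, not_hasTwoOuter_normalForm,
      isSingularPencil_normalForm, not_isSingularPencil_normalForm, hasTwoSingular_normalForm,
      not_hasTwoSingular_normalForm, hasThreeSingular_normalForm,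
      not_hasThreeSingular_normalForm, normalForm_ne_zero, -not_and]

/-- The invariant `pencilIndex` on the orbits of tensors. -/
def orbitIndex : Quot relT10 → Fin 18 :=
  Quot.lift (fun w => pencilIndex (slice w 0) (slice w 1))
    fun v w h => ((relT10_iff v w).1 h).pencilIndex_eq

theorem orbitIndex_bijective : Function.Bijective orbitIndex := by
  have key (w : Tensor233) :
      PencilEquiv (slice w 0) (slice w 1) (normalForm (orbitIndex (Quot.mk _ w))).1
        (normalForm (orbitIndex (Quot.mk _ w))).2 := by
    obtain ⟨i, hi⟩ := hasNormalForm (slice w 0) (slice w 1)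
    have : orbitIndex (Quot.mk _ w) = i := hi.pencilIndex_eq.trans (pencilIndex_normalForm i)
    rwa [this]
  constructor
  · rintro ⟨v⟩ ⟨w⟩ h
    exact Quot.sound ((relT10_iff v w).2 ((key v).trans (h ▸ (key w).symm)))
  · intro i
    obtain ⟨v, h₀, h₁⟩ := exists_slice_eq (normalForm i).1 (normalForm i).2
    refine ⟨Quot.mk _ v, ?_⟩
    change pencilIndex (slice v 0) (slice v 1) = i
    rw [h₀, h₁, pencilIndex_normalForm]

/-- The action of `SL₂(ℂ) × SL₃(ℂ) × SL₃(ℂ) × ℂ^×` on `ℂ² ⊗ ℂ³ ⊗ ℂ³` has exactly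
18 orbits. -/
theorem sl2_sl3_sl3_action_eighteen_orbits : Nat.card (Quot relT10) = 18 := by
  rw [Nat.card_congr (Equiv.ofBijective _ orbitIndex_bijective), Nat.card_fin]
end
end

section
/- The GL_6(ℂ)-orbit of the element w = e_1∧e_2∧e_3 + e_4∧e_5∧e_6 in ⋀³ℂ⁶ is Zariski dense: every polynomial function on ⋀³ℂ⁶ (i.e., every polynomial in the 20 Plücker coordinates) that vanishes on the orbit {g·w : g ∈ GL_6(ℂ)} is identically zero. -/
noncomputable section

open ExteriorAlgebra

/-- The standard basis vectors of `ℂ⁶`. -/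
def stdBasis6 (i : Fin 6) : Fin 6 → ℂ := Pi.single i 1

/-- The wedge `e_a ∧ e_b ∧ e_c`, an element of `⋀³ℂ⁶ ⊆ ⋀ℂ⁶`. -/
def wedge3 (a b c : Fin 6) : ExteriorAlgebra ℂ (Fin 6 → ℂ) :=
  ExteriorAlgebra.ιMulti ℂ 3 ![stdBasis6 a, stdBasis6 b, stdBasis6 c]

open Filter Topology

/-- A polynomial in linear coordinates that vanishes near one point vanishes identically. -/
lemma eval_linear_eq_zero_of_eventually {F : Type*} [AddCommGroup F] [Module ℂ F]
    [TopologicalSpace F] [IsTopologicalAddGroup F] [ContinuousSMul ℂ F] {n : ℕ}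
    (ψ : Fin n → (F →ₗ[ℂ] ℂ)) (p : MvPolynomial (Fin n) ℂ) (w : F)
    (h : ∀ᶠ y in 𝓝 w, MvPolynomial.eval (fun i => ψ i y) p = 0) (v : F) :
    MvPolynomial.eval (fun i => ψ i v) p = 0 := by
  let q : Polynomial ℂ := MvPolynomial.aeval
    (fun i => Polynomial.C (ψ i w) + Polynomial.X * Polynomial.C (ψ i (v - w))) p
  have hq (t : ℂ) : q.eval t = MvPolynomial.eval (fun i => ψ i (w + t • (v - w))) p := by
    rw [← Polynomial.coe_evalRingHom, MvPolynomial.map_aeval]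
    exact MvPolynomial.eval₂Hom_congr (by ext; simp) (by ext; simp) rfl
  have hline : Tendsto (fun t : ℂ => w + t • (v - w)) (𝓝 0) (𝓝 w) := by
    have : Continuous (fun t : ℂ => w + t • (v - w)) := by fun_prop
    simpa using this.tendsto 0
  have hev : ∀ᶠ t in 𝓝 (0 : ℂ), q.IsRoot t := by
    filter_upwards [hline.eventually h] with t ht
    rw [Polynomial.IsRoot, hq, ht]
  have hzero : q = 0 := q.eq_zero_of_infinite_isRoot (infinite_of_mem_nhds 0 hev)
  simpa [hzero] using (hq 1).symm

/-- A multilinear map on finite powers of `ℂᵏ` is continuous. -/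
lemma continuous_multilinearMap_pi {k : ℕ} {ι F : Type*} [Fintype ι] [AddCommGroup F] [Module ℂ F]
    [TopologicalSpace F] [IsTopologicalAddGroup F] [ContinuousSMul ℂ F]
    (f : MultilinearMap ℂ (fun _ : ι => Fin k → ℂ) F) : Continuous f := by
  classical
  have hf (m : ι → Fin k → ℂ) :
      f m = ∑ r : ι → Fin k, (∏ i, m i (r i)) • f (fun i => Pi.single (r i) 1) := by
    have hm : m = fun i => ∑ j, m i j • (Pi.single j 1 : Fin k → ℂ) :=
      funext fun i => pi_eq_sum_univ' (m i)
    conv_lhs => rw [hm, f.map_sum]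
    exact Finset.sum_congr rfl fun r _ => f.map_smul_univ _ _
  rw [show (f : (ι → Fin k → ℂ) → F) = _ from funext hf]
  fun_prop

/-- Up to order, three distinct indices in `Fin 6` differ in at most one place from
`0, 1, 2` or from `3, 4, 5`. -/
lemma exists_perm_eq_update (v : Fin 3 → Fin 6) (hv : Function.Injective v) :
    ∃ (σ : Equiv.Perm (Fin 3)) (i : Fin 3) (x : Fin 6),
      v ∘ σ = Function.update ![0, 1, 2] i x ∨ v ∘ σ = Function.update ![3, 4, 5] i x := by
  set_option maxRecDepth 10000 in
  revert v
  decide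

/-- The trivectors meeting `e₁∧e₂∧e₃` or `e₄∧e₅∧e₆` in two factors span `⋀³ℂ⁶`. -/
lemma eq_top_of_update_mem {F : Type*} [AddCommGroup F] [Module ℂ F]
    (A : (Fin 6 → ℂ) [⋀^Fin 3]→ₗ[ℂ] F) (hA : Submodule.span ℂ (Set.range A) = ⊤)
    (S : Submodule ℂ F)
    (h₁ : ∀ i x, A (Function.update (stdBasis6 ∘ ![0, 1, 2]) i x) ∈ S)
    (h₂ : ∀ i x, A (Function.update (stdBasis6 ∘ ![3, 4, 5]) i x) ∈ S) : S = ⊤ := by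
  have hb (v : Fin 3 → Fin 6) (hv : Function.Injective v) : A (stdBasis6 ∘ v) ∈ S := by
    obtain ⟨σ, i, x, h⟩ := exists_perm_eq_update v hv
    have hσ : A ((stdBasis6 ∘ v) ∘ σ) ∈ S := by
      rw [Function.comp_assoc]
      rcases h with h | h <;> rw [h, Function.comp_update]
      exacts [h₁ _ _, h₂ _ _]
    rw [A.map_perm] at hσ
    rcases Int.units_eq_one_or (Equiv.Perm.sign σ) with hs | hs <;> simpa [hs] using hσ
  have hq : S.mkQ.compAlternatingMap A = 0 := by
    refine Module.Basis.ext_alternating (Pi.basisFun ℂ (Fin 6)) fun v hv => ?_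
    have := hb v hv
    simpa [Function.comp_def, stdBasis6] using this
  rw [eq_top_iff, ← hA, Submodule.span_le]
  rintro _ ⟨m, rfl⟩
  simpa using congrArg (fun B => B m) hq

/-- The map `(u₁, …, u₆) ↦ u₁∧u₂∧u₃ + u₄∧u₅∧u₆` is open at the standard basis. -/
lemma map_nhds_stdBasis6 {F : Type*} [NormedAddCommGroup F] [NormedSpace ℂ F] [CompleteSpace F]
    (A : (Fin 6 → ℂ) [⋀^Fin 3]→ₗ[ℂ] F) (hA : Submodule.span ℂ (Set.range A) = ⊤) :
    map (fun u : Fin 6 → Fin 6 → ℂ => A (u ∘ ![0, 1, 2]) + A (u ∘ ![3, 4, 5])) (𝓝 stdBasis6) =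
      𝓝 (A (stdBasis6 ∘ ![0, 1, 2]) + A (stdBasis6 ∘ ![3, 4, 5])) := by
  let B : ContinuousMultilinearMap ℂ (fun _ : Fin 3 => Fin 6 → ℂ) F :=
    ⟨A.toMultilinearMap, continuous_multilinearMap_pi _⟩
  let r (c : Fin 3 → Fin 6) : (Fin 6 → Fin 6 → ℂ) →L[ℂ] (Fin 3 → Fin 6 → ℂ) :=
    ContinuousLinearMap.pi fun i => ContinuousLinearMap.proj (c i)
  have hd (c : Fin 3 → Fin 6) : HasStrictFDerivAt (fun u : Fin 6 → Fin 6 → ℂ => A (u ∘ c))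
      ((B.linearDeriv (stdBasis6 ∘ c)).comp (r c)) stdBasis6 :=
    (B.hasStrictFDerivAt (stdBasis6 ∘ c)).comp stdBasis6 (r c).hasStrictFDerivAt
  have hval (c : Fin 3 → Fin 6) (y : Fin 6 → Fin 6 → ℂ) :
      (B.linearDeriv (stdBasis6 ∘ c)).comp (r c) y =
        ∑ i, A (Function.update (stdBasis6 ∘ c) i (y (c i))) := by
    rw [ContinuousLinearMap.comp_apply, ContinuousMultilinearMap.linearDeriv_apply]
    rfl
  have hz (c : Fin 3 → Fin 6) (i : Fin 3) : A (Function.update (stdBasis6 ∘ c) i 0) = 0 :=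
    A.map_coord_zero i (by simp)
  refine ((hd _).add (hd _)).map_nhds_eq_of_surj (eq_top_of_update_mem A hA _ ?_ ?_)
  · intro i x
    refine ⟨Pi.single (![0, 1, 2] i) x, ?_⟩
    rw [ContinuousLinearMap.coe_coe, add_apply, hval, hval]
    fin_cases i <;> simp [Fin.sum_univ_three, Pi.single_apply, hz]
  · intro i x
    refine ⟨Pi.single (![3, 4, 5] i) x, ?_⟩
    rw [ContinuousLinearMap.coe_coe, add_apply, hval, hval]
    fin_cases i <;> simp [Fin.sum_univ_three, Pi.single_apply, hz]

/-- Every family close to the standard basis is its image under an invertible linear map. -/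
lemma eventually_exists_linearEquiv :
    ∀ᶠ u in 𝓝 stdBasis6, ∃ g : (Fin 6 → ℂ) ≃ₗ[ℂ] (Fin 6 → ℂ), ∀ i, g (stdBasis6 i) = u i := by
  have hc : Continuous fun u : Fin 6 → Fin 6 → ℂ => (Matrix.of u).transpose.det :=
    Continuous.matrix_det (Continuous.matrix_transpose continuous_id)
  have h1 : (Matrix.of stdBasis6).transpose.det ≠ 0 := by
    have : Matrix.of stdBasis6 = 1 := by
      ext i j
      simp [stdBasis6, Matrix.one_apply, Pi.single_apply, eq_comm]
    simp [this]
  filter_upwards [hc.continuousAt.eventually_ne h1] with u hu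
  refine ⟨(Matrix.toLin' (Matrix.of u).transpose).equivOfDetNeZero (by rwa [LinearMap.det_toLin']),
    fun i => ?_⟩
  ext j
  simp [stdBasis6]

/-- The `GL₆(ℂ)`-orbit of `w = e₁∧e₂∧e₃ + e₄∧e₅∧e₆` is Zariski dense in `⋀³ℂ⁶`:
every polynomial expression in linear coordinates that vanishes at every point of
the orbit vanishes at every point of `⋀³ℂ⁶`. -/
theorem orbit_of_generic_trivector_is_dense
    (n : ℕ) (φ : Fin n → (ExteriorAlgebra ℂ (Fin 6 → ℂ) →ₗ[ℂ] ℂ))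
    (p : MvPolynomial (Fin n) ℂ)
    (hvanish : ∀ g : (Fin 6 → ℂ) ≃ₗ[ℂ] (Fin 6 → ℂ),
      MvPolynomial.eval
        (fun i => φ i (ExteriorAlgebra.map (g : (Fin 6 → ℂ) →ₗ[ℂ] (Fin 6 → ℂ))
          (wedge3 0 1 2 + wedge3 3 4 5))) p = 0) :
    ∀ v ∈ ⋀[ℂ]^3 (Fin 6 → ℂ), MvPolynomial.eval (fun i => φ i v) p = 0 := by
  let e : ⋀[ℂ]^3 (Fin 6 → ℂ) ≃ₗ[ℂ] (Fin (Module.finrank ℂ (⋀[ℂ]^3 (Fin 6 → ℂ))) → ℂ) :=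
    (Module.finBasis ℂ (⋀[ℂ]^3 (Fin 6 → ℂ))).equivFun
  let A := e.toLinearMap.compAlternatingMap (exteriorPower.ιMulti ℂ 3 (M := Fin 6 → ℂ))
  have hA : Submodule.span ℂ (Set.range A) = ⊤ := by
    rw [show Set.range A = e.toLinearMap '' Set.range (exteriorPower.ιMulti ℂ 3) from
      Set.range_comp e (exteriorPower.ιMulti ℂ 3), ← Submodule.map_span, exteriorPower.ιMulti_span, Submodule.map_top,
      LinearEquiv.range]
  let ψ (i : Fin n) := φ i ∘ₗ (⋀[ℂ]^3 (Fin 6 → ℂ)).subtype ∘ₗ e.symm.toLinearMap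
  have horbit : ∀ᶠ y in 𝓝 (A (stdBasis6 ∘ ![0, 1, 2]) + A (stdBasis6 ∘ ![3, 4, 5])),
      MvPolynomial.eval (fun i => ψ i y) p = 0 := by
    rw [← map_nhds_stdBasis6 A hA, eventually_map]
    filter_upwards [eventually_exists_linearEquiv] with u ⟨g, hg⟩
    have hw (a b c : Fin 6) : ExteriorAlgebra.map (g : (Fin 6 → ℂ) →ₗ[ℂ] (Fin 6 → ℂ))
        (wedge3 a b c) = ExteriorAlgebra.ιMulti ℂ 3 (u ∘ ![a, b, c]) := by
      rw [wedge3, ExteriorAlgebra.map_apply_ιMulti]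
      congr 1
      ext i : 1
      fin_cases i <;> simp [hg]
    have := hvanish g
    rw [map_add, hw, hw] at this
    simpa [ψ, A] using this
  intro v hv
  simpa [ψ] using eval_linear_eq_zero_of_eventually ψ p _ horbit (e ⟨v, hv⟩)
end
end
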